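/- arXiv:1202.4539 — 2 statements merged into one kernel-verified Lean document; each statement's English description precedes it below -/
import Mathlib

section
/- The set { (θ_1, θ_2) ∈ ℝ² : inf_{x ∈ ℤ, x ≥ 3} x · (log x) · (log log x) · ‖θ_1 x‖ · ‖θ_2 x‖ > 0 } has Hausdorff dimension equal to 2. Moreover, if θ_1 is a real number with inf_{q ∈ ℤ_{>0}} q‖qθ_1‖ > 0, then the set { θ_2 ∈ ℝ : inf_{x ∈ ℤ, x ≥ 3} x · (log x) · (log log x) · ‖θ_1 x‖ · ‖θ_2 x‖ > 0 } has Hausdorff dimension equal to 1. -/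
open Filter

/-- Distance from a real number to the nearest integer. -/
noncomputable def nint (x : ℝ) : ℝ := |x - round x|

section CantorTree

/-- Nodes of level `n` of the tree are indexed by natural numbers, the parent of `a` at level `n + 1`
being `a / R n`. A node is alive if neither it nor any of its ancestors belongs to `Bad`. -/
def Alive (R : ℕ → ℕ) (Bad : ℕ → Set ℕ) : ℕ → ℕ → Prop
  | 0, a => a = 0
  | n + 1, a => Alive R Bad n (a / R n) ∧ a ∉ Bad n

/-- The children of the node `a` of level `n`. -/
def childNodes (R : ℕ → ℕ) (n a : ℕ) : Finset ℕ := Finset.Ico (a * R n) ((a + 1) * R n)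

lemma mem_childNodes {R : ℕ → ℕ} (hR : ∀ n, 0 < R n) {n a b : ℕ} :
    b ∈ childNodes R n a ↔ b / R n = a := by
  rw [childNodes, Finset.mem_Ico, Nat.div_eq_iff (hR n)]
  have := hR n
  have h : (a + 1) * R n = a * R n + R n := by ring
  rw [h]
  omega

lemma card_childNodes (R : ℕ → ℕ) (n a : ℕ) : (childNodes R n a).card = R n := by
  rw [childNodes, Nat.card_Ico]
  have h : (a + 1) * R n = a * R n + R n := by ring
  omega

open Classical in
/-- A node is rich to depth `k` if it is the root of a subtree of depth `k` of alive nodes in which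
every node of level `n` has at least `R n / 4` children. -/
def Rich (R : ℕ → ℕ) (Bad : ℕ → Set ℕ) : ℕ → ℕ → ℕ → Prop
  | 0, n, a => Alive R Bad n a
  | k + 1, n, a => Alive R Bad n a ∧
      R n ≤ 4 * ((childNodes R n a).filter fun b => Rich R Bad k (n + 1) b).card

lemma Rich.alive {R : ℕ → ℕ} {Bad : ℕ → Set ℕ} {k n a : ℕ} (h : Rich R Bad k n a) :
    Alive R Bad n a := by
  cases k with
  | zero => exact h
  | succ k => exact h.1

open Classical in
lemma Rich.of_succ {R : ℕ → ℕ} {Bad : ℕ → Set ℕ} {k : ℕ} :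
    ∀ {n a : ℕ}, Rich R Bad (k + 1) n a → Rich R Bad k n a := by
  induction k with
  | zero => intro n a h; exact h.1
  | succ k ih =>
    intro n a h
    refine ⟨h.1, h.2.trans ?_⟩
    gcongr 4 * Finset.card ?_
    intro b hb
    rw [Finset.mem_filter] at hb ⊢
    exact ⟨hb.1, ih hb.2⟩

lemma Rich.mono {R : ℕ → ℕ} {Bad : ℕ → Set ℕ} {k l n a : ℕ} (hkl : k ≤ l)
    (h : Rich R Bad l n a) : Rich R Bad k n a := by
  induction l, hkl using Nat.le_induction with
  | base => exact h
  | succ l _ ih => exact ih h.of_succ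

open Classical in
/-- The bad sets are sparse: seen from some earlier alive level, few descendants are bad. -/
def SparseBad (R : ℕ → ℕ) (Bad : ℕ → Set ℕ) : Prop :=
  ∀ n, ∃ m ≤ n, ∀ c, Alive R Bad m c →
    4 * 2 ^ (n - m) * ((Finset.Ico (c * ∏ i ∈ Finset.Ico m (n + 1), R i)
      ((c + 1) * ∏ i ∈ Finset.Ico m (n + 1), R i)).filter fun b => b ∈ Bad n).card
      ≤ ∏ i ∈ Finset.Ico m (n + 1), R i

open Classical in
/-- Level `n` of the subtree of alive nodes which are not rich to depth `k - n`. -/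
noncomputable def poorNodes (R : ℕ → ℕ) (Bad : ℕ → Set ℕ) (k : ℕ) : ℕ → Finset ℕ
  | 0 => {0}
  | n + 1 => ((poorNodes R Bad k n).biUnion (childNodes R n)).filter fun b =>
      Alive R Bad (n + 1) b ∧ ¬ Rich R Bad (k - (n + 1)) (n + 1) b

open Classical in
lemma poorNodes_alive {R : ℕ → ℕ} {Bad : ℕ → Set ℕ} {k n a : ℕ}
    (ha : a ∈ poorNodes R Bad k n) : Alive R Bad n a := by
  cases n with
  | zero => simpa [poorNodes, Alive] using ha
  | succ n =>
    rw [poorNodes, Finset.mem_filter] at ha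
    exact ha.2.1

open Classical in
lemma poorNodes_ancestor {R : ℕ → ℕ} {Bad : ℕ → Set ℕ} (hR : ∀ n, 0 < R n) {k m n : ℕ}
    (hmn : m ≤ n) : ∀ {a : ℕ}, a ∈ poorNodes R Bad k n →
      a / ∏ i ∈ Finset.Ico m n, R i ∈ poorNodes R Bad k m := by
  induction n, hmn using Nat.le_induction with
  | base => intro a ha; simpa using ha
  | succ n hmn ih =>
    intro a ha
    rw [poorNodes, Finset.mem_filter, Finset.mem_biUnion] at ha
    obtain ⟨⟨b, hb, hab⟩, -⟩ := ha
    rw [mem_childNodes hR] at hab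
    rw [Finset.prod_Ico_succ_top hmn, mul_comm, ← Nat.div_div_eq_div_mul, hab]
    exact ih hb

open Classical in
lemma card_poorNodes_succ {R : ℕ → ℕ} {Bad : ℕ → Set ℕ} (hR : ∀ n, 0 < R n)
    (hB : SparseBad R Bad) {k n : ℕ} (hn : n < k)
    (hpoor : ∀ a ∈ poorNodes R Bad k n, ¬ Rich R Bad (k - n) n a)
    (hgrow : ∀ m ≤ n, (∏ i ∈ Finset.Ico m n, R i) * (poorNodes R Bad k m).card
      ≤ 2 ^ (n - m) * (poorNodes R Bad k n).card) :
    R n * (poorNodes R Bad k n).card ≤ 2 * (poorNodes R Bad k (n + 1)).card := by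
  set T := poorNodes R Bad k n with hT
  set U := (T.biUnion (childNodes R n)).filter fun b => ¬ Rich R Bad (k - (n + 1)) (n + 1) b with hU
  have hU1 : 3 * R n * T.card ≤ 4 * U.card := by
    rw [hU, Finset.filter_biUnion, Finset.card_biUnion]
    · rw [Finset.mul_sum, mul_comm, ← smul_eq_mul, ← Finset.sum_const]
      refine Finset.sum_le_sum fun a ha => ?_
      have h1 := hpoor a ha
      rw [show k - n = (k - (n + 1)) + 1 by omega, Rich, not_and] at h1
      have h2 := h1 (poorNodes_alive ha)
      have h3 := Finset.card_filter_add_card_filter_not (s := childNodes R n a)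
        (fun b => Rich R Bad (k - (n + 1)) (n + 1) b)
      rw [card_childNodes] at h3
      omega
    · intro a _ b _ hab
      refine Finset.disjoint_left.2 fun x hx hy => hab ?_
      rw [Finset.mem_filter, mem_childNodes hR] at hx hy
      exact hx.1.symm.trans hy.1
  obtain ⟨m, hm, hc⟩ := hB n
  set Q := ∏ i ∈ Finset.Ico m (n + 1), R i with hQ
  have hQ' : Q = (∏ i ∈ Finset.Ico m n, R i) * R n := Finset.prod_Ico_succ_top hm _
  have hQ0 : 0 < Q := Finset.prod_pos fun i _ => hR i
  have hsub : U ⊆ poorNodes R Bad k (n + 1) ∪ (poorNodes R Bad k m).biUnion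
      fun c => (Finset.Ico (c * Q) ((c + 1) * Q)).filter fun b => b ∈ Bad n := by
    intro b hb
    rw [hU, Finset.mem_filter] at hb
    rw [Finset.mem_union]
    by_cases hbad : b ∈ Bad n
    · right
      rw [Finset.mem_biUnion] at hb
      obtain ⟨⟨a, ha, hab⟩, -⟩ := hb
      rw [mem_childNodes hR] at hab
      rw [Finset.mem_biUnion]
      refine ⟨_, poorNodes_ancestor hR hm ha, ?_⟩
      rw [Finset.mem_filter, Finset.mem_Ico]
      refine ⟨?_, hbad⟩
      rw [← hab, Nat.div_div_eq_div_mul, mul_comm (R n), ← hQ']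
      exact ⟨Nat.div_mul_le_self _ _, Nat.lt_mul_of_div_lt (Nat.lt_succ_self _) hQ0⟩
    · left
      rw [poorNodes, Finset.mem_filter]
      refine ⟨hb.1, ⟨?_, hbad⟩, hb.2⟩
      obtain ⟨a, ha, hab⟩ := Finset.mem_biUnion.1 hb.1
      rw [mem_childNodes hR] at hab
      rw [hab]
      exact poorNodes_alive ha
  have h1 := (Finset.card_le_card hsub).trans (Finset.card_union_le _ _)
  have h2 : 4 * 2 ^ (n - m) * ((poorNodes R Bad k m).biUnion
      fun c => (Finset.Ico (c * Q) ((c + 1) * Q)).filter fun b => b ∈ Bad n).card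
      ≤ (poorNodes R Bad k m).card * Q := by
    calc _ ≤ 4 * 2 ^ (n - m) * ∑ c ∈ poorNodes R Bad k m,
          ((Finset.Ico (c * Q) ((c + 1) * Q)).filter fun b => b ∈ Bad n).card := by
          gcongr; exact Finset.card_biUnion_le
      _ ≤ ∑ c ∈ poorNodes R Bad k m, Q := by
          rw [Finset.mul_sum]
          exact Finset.sum_le_sum fun c hc' => hc c (poorNodes_alive hc')
      _ = _ := by simp
  set W := ((poorNodes R Bad k m).biUnion
      fun c => (Finset.Ico (c * Q) ((c + 1) * Q)).filter fun b => b ∈ Bad n).card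
  have h3 : 4 * W ≤ R n * T.card := by
    have h4 := hgrow m hm
    have h5 : 2 ^ (n - m) * (4 * W) ≤ 2 ^ (n - m) * (R n * T.card) := by
      calc 2 ^ (n - m) * (4 * W) = 4 * 2 ^ (n - m) * W := by ring
        _ ≤ (poorNodes R Bad k m).card * Q := h2
        _ = R n * ((∏ i ∈ Finset.Ico m n, R i) * (poorNodes R Bad k m).card) := by
            rw [hQ']; ring
        _ ≤ R n * (2 ^ (n - m) * T.card) := by gcongr
        _ = _ := by ring
    exact Nat.le_of_mul_le_mul_left h5 (by positivity)
  have h6 : 3 * R n * T.card = 3 * (R n * T.card) := by ring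
  omega

open Classical in
lemma poorNodes_growth {R : ℕ → ℕ} {Bad : ℕ → Set ℕ} (hR : ∀ n, 0 < R n)
    (hB : SparseBad R Bad) {k : ℕ} (h0 : ¬ Rich R Bad k 0 0) {n : ℕ} (hn : n ≤ k) :
    ∀ m ≤ n, (∏ i ∈ Finset.Ico m n, R i) * (poorNodes R Bad k m).card
      ≤ 2 ^ (n - m) * (poorNodes R Bad k n).card := by
  induction n with
  | zero => intro m hm; obtain rfl : m = 0 := by omega
            simp
  | succ n ih =>
    have ih' := ih (by omega)
    have hpoor : ∀ a ∈ poorNodes R Bad k n, ¬ Rich R Bad (k - n) n a := by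
      intro a ha
      cases n with
      | zero =>
        obtain rfl : a = 0 := by simpa [poorNodes] using ha
        simpa using h0
      | succ n =>
        rw [poorNodes, Finset.mem_filter] at ha
        exact ha.2.2
    have hstep := card_poorNodes_succ hR hB (by omega) hpoor ih'
    intro m hm
    rcases Nat.lt_or_ge n m with h | h
    · obtain rfl : m = n + 1 := by omega
      simp
    · rw [Finset.prod_Ico_succ_top h, show n + 1 - m = (n - m) + 1 by omega]
      calc _ = R n * ((∏ i ∈ Finset.Ico m n, R i) * (poorNodes R Bad k m).card) := by ring
        _ ≤ R n * (2 ^ (n - m) * (poorNodes R Bad k n).card) := by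
            gcongr R n * ?_; exact ih' m h
        _ = 2 ^ (n - m) * (R n * (poorNodes R Bad k n).card) := by ring
        _ ≤ 2 ^ (n - m) * (2 * (poorNodes R Bad k (n + 1)).card) := by gcongr
        _ = _ := by ring

open Classical in
lemma rich_root {R : ℕ → ℕ} {Bad : ℕ → Set ℕ} (hR : ∀ n, 0 < R n)
    (hB : SparseBad R Bad) (k : ℕ) : Rich R Bad k 0 0 := by
  by_contra h0
  have h := poorNodes_growth hR hB h0 le_rfl 0 (Nat.zero_le _)
  have hpos : 0 < (∏ i ∈ Finset.Ico 0 k, R i) * (poorNodes R Bad k 0).card := by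
    simp only [poorNodes, Finset.card_singleton, mul_one]
    exact Finset.prod_pos fun i _ => hR i
  have hne : (poorNodes R Bad k k).Nonempty := by
    rw [← Finset.card_pos]
    exact Nat.pos_of_mul_pos_left (hpos.trans_le h)
  obtain ⟨a, ha⟩ := hne
  cases k with
  | zero => exact h0 rfl
  | succ k =>
    rw [poorNodes, Finset.mem_filter] at ha
    exact ha.2.2 (by rw [Nat.sub_self]; exact ha.2.1)

open Classical in
lemma card_rich_children {R : ℕ → ℕ} {Bad : ℕ → Set ℕ} {n a : ℕ}
    (h : ∀ k, Rich R Bad k n a) :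
    R n ≤ 4 * ((childNodes R n a).filter fun b => ∀ k, Rich R Bad k (n + 1) b).card := by
  have key : ∀ b, ∃ k, (Rich R Bad k (n + 1) b → ∀ l, Rich R Bad l (n + 1) b) := by
    intro b
    by_cases hb : ∀ l, Rich R Bad l (n + 1) b
    · exact ⟨0, fun _ => hb⟩
    · push Not at hb
      obtain ⟨k, hk⟩ := hb
      exact ⟨k, fun h => absurd h hk⟩
  choose f hf using key
  refine (h ((childNodes R n a).sup f + 1)).2.trans ?_
  gcongr 4 * Finset.card ?_
  intro b hb
  rw [Finset.mem_filter] at hb ⊢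
  exact ⟨hb.1, hf b (hb.2.mono (Finset.le_sup hb.1))⟩

lemma exists_spaced_of_card {s : Finset ℕ} {M : ℕ} (h : 2 * M ≤ s.card) :
    ∃ f : ℕ → ℕ, (∀ t < M, f t ∈ s) ∧ ∀ t t', t < t' → t' < M → f t + 2 ≤ f t' := by
  refine ⟨fun t => if ht : 2 * t < s.card then s.orderEmbOfFin rfl ⟨2 * t, ht⟩ else 0, ?_, ?_⟩
  · intro t ht
    beta_reduce
    rw [dif_pos (by omega)]
    exact Finset.orderEmbOfFin_mem _ _ _
  · intro t t' htt' ht'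
    beta_reduce
    rw [dif_pos (by omega), dif_pos (by omega)]
    have h1 : s.orderEmbOfFin rfl ⟨2 * t, by omega⟩ < s.orderEmbOfFin rfl ⟨2 * t + 1, by omega⟩ :=
      (s.orderEmbOfFin rfl).strictMono (by simp [Fin.lt_def])
    have h2 : s.orderEmbOfFin rfl ⟨2 * t + 1, by omega⟩ < s.orderEmbOfFin rfl ⟨2 * t', by omega⟩ :=
      (s.orderEmbOfFin rfl).strictMono (by rw [Fin.lt_def]; simp; omega)
    omega

lemma exists_regular_subtree {R : ℕ → ℕ} {Bad : ℕ → Set ℕ} (hR : ∀ n, 16 ≤ R n)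
    (hB : SparseBad R Bad) : ∃ e : ℕ → ℕ → ℕ, e 0 0 = 0 ∧
      (∀ n a, Rich R Bad 0 n (e n a) ∧ e (n + 1) a / R n = e n (a / (R n / 8))) ∧
      ∀ n a b, a / (R n / 8) = b / (R n / 8) → a < b → e (n + 1) a + 2 ≤ e (n + 1) b := by
  classical
  have hR0 : ∀ n, 0 < R n := fun n => by have := hR n; omega
  have hpick : ∀ n p, ∃ f : ℕ → ℕ, (∀ k, Rich R Bad k n p) →
      (∀ t < R n / 8, f t / R n = p ∧ ∀ k, Rich R Bad k (n + 1) (f t)) ∧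
      ∀ t t', t < t' → t' < R n / 8 → f t + 2 ≤ f t' := by
    intro n p
    by_cases h : ∀ k, Rich R Bad k n p
    · have h1 := card_rich_children h
      obtain ⟨f, hf, hf'⟩ := exists_spaced_of_card (M := R n / 8)
        (s := (childNodes R n p).filter fun b => ∀ k, Rich R Bad k (n + 1) b) (by omega)
      refine ⟨f, fun _ => ⟨fun t ht => ?_, hf'⟩⟩
      have h2 := hf t ht
      rw [Finset.mem_filter, mem_childNodes hR0] at h2
      exact h2
    · exact ⟨id, fun h' => absurd h' h⟩
  choose f hf using hpick
  let e : ℕ → ℕ → ℕ := fun n => Nat.rec (fun _ => 0)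
    (fun n en a => f n (en (a / (R n / 8))) (a % (R n / 8))) n
  have he : ∀ n a, e (n + 1) a = f n (e n (a / (R n / 8))) (a % (R n / 8)) := fun _ _ => rfl
  have hM : ∀ n a, a % (R n / 8) < R n / 8 := fun n a => Nat.mod_lt _ (by have := hR n; omega)
  have hrich : ∀ n a k, Rich R Bad k n (e n a) := by
    intro n
    induction n with
    | zero => intro a k; exact rich_root hR0 hB k
    | succ n ih => intro a k; rw [he]; exact ((hf n _ (ih _)).1 _ (hM n a)).2 k
  refine ⟨e, rfl, fun n a => ⟨hrich n a 0, ?_⟩, fun n a b hab hlt => ?_⟩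
  · rw [he]; exact ((hf n _ (hrich n _)).1 _ (hM n a)).1
  · rw [he, he, hab]
    refine (hf n _ (hrich n _)).2 _ _ ?_ (hM n b)
    have h1 := Nat.div_add_mod a (R n / 8)
    have h2 := Nat.div_add_mod b (R n / 8)
    rw [hab] at h1
    omega

end CantorTree

section CantorEmbedding

lemma exists_mem_nested_intervals {R : ℕ → ℕ} (hR : ∀ n, 0 < R n) {x : ℕ → ℕ}
    (hx : ∀ n, x (n + 1) / R n = x n) :
    ∃ z : ℝ, ∀ n, (x n : ℝ) / (∏ i ∈ Finset.range n, R i : ℕ) ≤ z ∧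
      z ≤ ((x n : ℝ) + 1) / (∏ i ∈ Finset.range n, R i : ℕ) := by
  set N : ℕ → ℕ := fun n => ∏ i ∈ Finset.range n, R i
  have hN : ∀ n, 0 < (N n : ℝ) := fun n => by
    exact_mod_cast Finset.prod_pos fun i _ => hR i
  have hNs : ∀ n, (N (n + 1) : ℝ) = N n * R n := fun n => by
    simp only [N]; rw [Finset.prod_range_succ]; push_cast; ring
  have hR' : ∀ n, 0 < (R n : ℝ) := fun n => by exact_mod_cast hR n
  have h1 : Monotone fun n => (x n : ℝ) / N n := by
    refine monotone_nat_of_le_succ fun n => ?_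
    rw [div_le_div_iff₀ (hN _) (hN _), hNs]
    have h : (x n : ℝ) * R n ≤ x (n + 1) := by
      rw [← hx n]; exact_mod_cast Nat.div_mul_le_self _ _
    nlinarith [hN n]
  have h2 : Antitone fun n => ((x n : ℝ) + 1) / N n := by
    refine antitone_nat_of_succ_le fun n => ?_
    rw [div_le_div_iff₀ (hN _) (hN _), hNs]
    have h : (x (n + 1) : ℝ) + 1 ≤ (x n + 1) * R n := by
      rw [← hx n]; exact_mod_cast Nat.lt_mul_of_div_lt (Nat.lt_succ_self _) (hR n)
    nlinarith [hN n]
  have h3 : ∀ n, (x n : ℝ) / N n ≤ ((x n : ℝ) + 1) / N n := fun n => by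
    have := hN n; gcongr; linarith
  have h4 := h1.ciSup_mem_iInter_Icc_of_antitone h2 h3
  exact ⟨_, fun n => Set.mem_iInter.1 h4 n⟩

theorem exists_cantor_embedding {R : ℕ → ℕ} {Bad : ℕ → Set ℕ} (hR : ∀ n, 16 ≤ R n)
    (hB : SparseBad R Bad) : ∃ h : ℝ → ℝ,
      (∀ u ∈ Set.Ico (0 : ℝ) 1, ∀ n, ∃ a, Alive R Bad n a ∧
        (a : ℝ) / (∏ i ∈ Finset.range n, R i : ℕ) ≤ h u ∧
        h u ≤ ((a : ℝ) + 1) / (∏ i ∈ Finset.range n, R i : ℕ)) ∧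
      ∀ u ∈ Set.Ico (0 : ℝ) 1, ∀ v ∈ Set.Ico (0 : ℝ) 1, u ≠ v → ∃ n,
        |u - v| ≤ 1 / (∏ i ∈ Finset.range n, R i / 8 : ℕ) ∧
        1 / (∏ i ∈ Finset.range (n + 1), R i : ℕ) ≤ |h u - h v| := by
  obtain ⟨e, he0, he, hsep⟩ := exists_regular_subtree hR hB
  have hR0 : ∀ n, 0 < R n := fun n => by have := hR n; omega
  set P : ℕ → ℕ := fun n => ∏ i ∈ Finset.range n, R i / 8 with hP
  have hP2 : ∀ n, 2 ^ n ≤ P n := fun n => by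
    simpa using Finset.pow_card_le_prod (s := Finset.range n) (f := fun i => R i / 8) (n := 2)
      (fun i _ => by have := hR i; omega)
  have hP0 : ∀ n, 0 < P n := fun n => lt_of_lt_of_le (by positivity) (hP2 n)
  let d : ℝ → ℕ → ℕ := fun u n => ⌊u * P n⌋₊
  have hd : ∀ u n, d u (n + 1) / (R n / 8) = d u n := by
    intro u n
    simp only [d]
    rw [← Nat.floor_div_natCast]
    congr 1
    simp only [hP]
    rw [Finset.prod_range_succ, Nat.cast_mul, ← mul_assoc]
    refine mul_div_cancel_right₀ _ ?_
    have := hR n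
    exact_mod_cast (by omega : R n / 8 ≠ 0)
  have hx : ∀ u n, e (n + 1) (d u (n + 1)) / R n = e n (d u n) := fun u n => by
    rw [(he n _).2, hd]
  choose h hh using fun u => exists_mem_nested_intervals (x := fun n => e n (d u n)) hR0 (hx u)
  refine ⟨h, fun u _ n => ⟨_, (he n (d u n)).1, hh u n⟩, fun u hu v hv huv => ?_⟩
  have hclose : ∀ n, d u n = d v n → |u - v| ≤ 1 / (P n : ℝ) := by
    intro n hn
    have h1 := Nat.floor_le (mul_nonneg hu.1 (Nat.cast_nonneg (P n)))
    have h2 := Nat.lt_floor_add_one (u * P n)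
    have h3 := Nat.floor_le (mul_nonneg hv.1 (Nat.cast_nonneg (P n)))
    have h4 := Nat.lt_floor_add_one (v * P n)
    simp only [d] at hn
    rw [hn] at h1 h2
    have h5 : (0 : ℝ) < P n := by exact_mod_cast hP0 n
    rw [le_div_iff₀ h5]
    have h6 : |u - v| * (P n : ℝ) = |u * P n - v * P n| := by
      rw [← sub_mul, abs_mul, abs_of_pos h5]
    rw [h6, abs_le]
    constructor <;> linarith
  have hex : ∃ n, d u n ≠ d v n := by
    by_contra hne
    push Not at hne
    obtain ⟨n, hn⟩ := exists_pow_lt_of_lt_one (abs_pos.2 (sub_ne_zero.2 huv))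
      (by norm_num : (1 / 2 : ℝ) < 1)
    have h1 := hclose n (hne n)
    have h2 : (2 : ℝ) ^ n ≤ P n := by exact_mod_cast hP2 n
    have h3 : 1 / (P n : ℝ) ≤ 1 / 2 ^ n := by gcongr
    rw [div_pow, one_pow] at hn
    linarith
  classical
  obtain ⟨n, hn⟩ : ∃ n, Nat.find hex = n + 1 := by
    refine Nat.exists_eq_succ_of_ne_zero fun h0 => ?_
    have h1 := Nat.find_spec hex
    rw [h0] at h1
    apply h1
    have : ∀ w ∈ Set.Ico (0 : ℝ) 1, d w 0 = 0 := fun w hw => by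
      simp [d, hP, hw.2]
    rw [this u hu, this v hv]
  have hne : d u (n + 1) ≠ d v (n + 1) := hn ▸ Nat.find_spec hex
  have heq : d u n = d v n := by
    by_contra h'
    exact Nat.find_min hex (by omega) h'
  refine ⟨n, hclose n heq, ?_⟩
  set N : ℕ := ∏ i ∈ Finset.range (n + 1), R i with hNdef
  have hN : (0 : ℝ) < N := by exact_mod_cast Finset.prod_pos fun i _ => hR0 i
  have main : ∀ w w' : ℝ, d w n = d w' n → d w (n + 1) < d w' (n + 1) →
      1 / (N : ℝ) ≤ h w' - h w := by
    intro w w' hww hlt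
    have h1 := hsep n _ _ (by rw [hd, hd, hww]) hlt
    have h2 := (hh w (n + 1)).2
    have h3 := (hh w' (n + 1)).1
    rw [← hNdef] at h2 h3
    have h4 : ((e (n + 1) (d w (n + 1)) : ℝ) + 1) + 1 ≤ e (n + 1) (d w' (n + 1)) := by
      have : e (n + 1) (d w (n + 1)) + 1 + 1 ≤ e (n + 1) (d w' (n + 1)) := h1
      exact_mod_cast this
    have h5 : ((e (n + 1) (d w (n + 1)) : ℝ) + 1) / N + 1 / N
        ≤ e (n + 1) (d w' (n + 1)) / N := by
      rw [← add_div]; gcongr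
    linarith
  rcases lt_or_gt_of_ne hne with hlt | hlt
  · rw [abs_sub_comm]
    exact (main u v heq hlt).trans (le_abs_self _)
  · exact (main v u heq.symm hlt).trans (le_abs_self _)

/-- The set `A` is the image of `[0, 1)` under a map which shrinks distances at most like
`t ↦ t ^ (1 / s)`. -/
def IsSpread (s : ℝ) (A : Set ℝ) : Prop :=
  ∃ (h : ℝ → ℝ) (C : ℝ), 0 < C ∧ (∀ u ∈ Set.Ico (0 : ℝ) 1, h u ∈ A) ∧
    ∀ u ∈ Set.Ico (0 : ℝ) 1, ∀ v ∈ Set.Ico (0 : ℝ) 1, |u - v| ≤ C * |h u - h v| ^ s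

theorem isSpread_of_sparseBad {R : ℕ → ℕ} {Bad : ℕ → Set ℕ} (hR : ∀ n, 16 ≤ R n)
    (hB : SparseBad R Bad) {s C : ℝ} (hs : 0 < s) (hC : 0 < C)
    (hgrow : ∀ n, ((∏ i ∈ Finset.range (n + 1), R i : ℕ) : ℝ) ^ s
      ≤ C * (∏ i ∈ Finset.range n, R i / 8 : ℕ)) {A : Set ℝ}
    (hA : ∀ z, (∀ n, ∃ a, Alive R Bad n a ∧ (a : ℝ) / (∏ i ∈ Finset.range n, R i : ℕ) ≤ z ∧
        z ≤ ((a : ℝ) + 1) / (∏ i ∈ Finset.range n, R i : ℕ)) → z ∈ A) :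
    IsSpread s A := by
  obtain ⟨h, h1, h2⟩ := exists_cantor_embedding hR hB
  refine ⟨h, C, hC, fun u hu => hA _ (h1 u hu), fun u hu v hv => ?_⟩
  rcases eq_or_ne u v with rfl | huv
  · simp only [sub_self, abs_zero]
    positivity
  obtain ⟨n, hn1, hn2⟩ := h2 u hu v hv huv
  have hN : (0 : ℝ) < (∏ i ∈ Finset.range (n + 1), R i : ℕ) := by
    exact_mod_cast Finset.prod_pos fun i _ => (by have := hR i; omega : 0 < R i)
  have hP : (0 : ℝ) < (∏ i ∈ Finset.range n, R i / 8 : ℕ) := by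
    exact_mod_cast Finset.prod_pos fun i _ => (by have := hR i; omega : 0 < R i / 8)
  calc |u - v| ≤ 1 / (∏ i ∈ Finset.range n, R i / 8 : ℕ) := hn1
    _ ≤ C * (1 / (∏ i ∈ Finset.range (n + 1), R i : ℕ)) ^ s := by
        rw [Real.div_rpow zero_le_one hN.le, Real.one_rpow, mul_one_div,
          div_le_div_iff₀ hP (by positivity), one_mul]
        exact hgrow n
    _ ≤ C * |h u - h v| ^ s := by gcongr

end CantorEmbedding

section Dimension

open MeasureTheory Measure
open scoped ENNReal NNReal

lemma IsSpread.dimH_ge {s : ℝ≥0} (hs : 0 < s) {A : Set ℝ} (hA : IsSpread s A) :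
    (s : ℝ≥0∞) ≤ dimH A := by
  obtain ⟨h, C, hC, hmem, hsp⟩ := hA
  set I := Set.Ico (0 : ℝ) 1 with hI
  have hinj : Set.InjOn h I := by
    intro u hu v hv huv
    have h1 := hsp u hu v hv
    rw [huv, sub_self, abs_zero, Real.zero_rpow (by positivity), mul_zero] at h1
    exact sub_eq_zero.1 (abs_nonpos_iff.1 h1)
  set g := Function.invFunOn h I
  have hg : ∀ u ∈ I, g (h u) = u := fun u hu => hinj.leftInvOn_invFunOn hu
  have hold : HolderOnWith C.toNNReal s g (h '' I) := by
    rintro _ ⟨u, hu, rfl⟩ _ ⟨v, hv, rfl⟩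
    rw [hg u hu, hg v hv, edist_dist, edist_dist, Real.dist_eq, Real.dist_eq,
      ENNReal.ofReal_rpow_of_nonneg (abs_nonneg _) s.coe_nonneg,
      show ((C.toNNReal : ℝ≥0) : ℝ≥0∞) = ENNReal.ofReal C from rfl,
      ← ENNReal.ofReal_mul hC.le]
    exact ENNReal.ofReal_le_ofReal (hsp u hu v hv)
  have himg : g '' (h '' I) = I := by
    rw [Set.image_image, Set.image_congr hg, Set.image_id']
  have h1 := hold.dimH_image_le hs
  have h2 : dimH I = 1 := by
    have : (interior I).Nonempty := by rw [hI, interior_Ico]; exact ⟨1 / 2, by norm_num⟩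
    simpa using Real.dimH_of_nonempty_interior this
  rw [himg, h2] at h1
  have h3 : dimH (h '' I) ≤ dimH A := dimH_mono (by rintro _ ⟨u, hu, rfl⟩; exact hmem u hu)
  have hs0 : (s : ℝ≥0∞) ≠ 0 := by exact_mod_cast hs.ne'
  rw [ENNReal.le_div_iff_mul_le (Or.inl hs0) (Or.inl ENNReal.coe_ne_top), one_mul] at h1
  exact h1.trans h3

lemma exists_cover_of_hausdorffMeasure_zero {X : Type*} [EMetricSpace X] [MeasurableSpace X]
    [BorelSpace X] {d : ℝ} (hd : 0 < d) {A : Set X} (hA : μH[d] A = 0) {r ε : ℝ≥0∞}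
    (hr : 0 < r) (hε : 0 < ε) : ∃ t : ℕ → Set X, A ⊆ ⋃ n, t n ∧ (∀ n, Metric.ediam (t n) ≤ r) ∧
      ∑' n, Metric.ediam (t n) ^ d < ε := by
  rw [hausdorffMeasure_apply] at hA
  have h1 := (ENNReal.iSup_eq_zero.1 (ENNReal.iSup_eq_zero.1 hA r)) hr
  have h2 := h1.trans_lt hε
  simp only [iInf_lt_iff] at h2
  obtain ⟨t, ht, ht', hsum⟩ := h2
  refine ⟨t, ht, ht', lt_of_le_of_lt (ENNReal.tsum_le_tsum fun n => ?_) hsum⟩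
  rcases (t n).eq_empty_or_nonempty with h | h
  · simp [h, hd]
  · exact le_iSup (fun _ : (t n).Nonempty => Metric.ediam (t n) ^ d) h

/-- A lower bound for the Hausdorff dimension of a planar set in terms of its vertical slices. -/
theorem dimH_ge_of_slices {s t : ℝ≥0} (hs : 0 < s) (ht : 0 < t) {A : Set (ℝ × ℝ)} {B : Set ℝ}
    (hB : IsSpread t B) (hslice : ∀ x ∈ B, (s : ℝ≥0∞) < dimH {y | (x, y) ∈ A}) :
    (s : ℝ≥0∞) + t ≤ dimH A := by
  by_contra hlt
  rw [not_le, ← ENNReal.coe_add] at hlt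
  have hzero := hausdorffMeasure_of_dimH_lt hlt
  obtain ⟨h, C, hC, hmem, hsp⟩ := hB
  set I := Set.Ico (0 : ℝ) 1 with hI
  have hst : (0 : ℝ) < ((s + t : ℝ≥0) : ℝ) := by positivity
  choose E hE hdiam hsum using fun k : ℕ => exists_cover_of_hausdorffMeasure_zero hst hzero
    (r := ((k : ℝ≥0∞) + 1)⁻¹) (ε := 2⁻¹ ^ k) (by simp)
    (ENNReal.pow_pos (by simp) k)
  let S : ℕ → ℕ → Set ℝ := fun k i => {u | u ∈ I ∧ ∃ y, (h u, y) ∈ E k i}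
  have hS : ∀ k i, volume (S k i) ≤ ENNReal.ofReal C * Metric.ediam (E k i) ^ (t : ℝ) := by
    intro k i
    refine (Real.volume_le_diam _).trans (Metric.ediam_le fun u hu v hv => ?_)
    obtain ⟨hu, y, hy⟩ := hu
    obtain ⟨hv, z, hz⟩ := hv
    have h1 : edist (h u) (h v) ≤ Metric.ediam (E k i) :=
      (le_max_left (edist (h u) (h v)) (edist y z)).trans (Metric.edist_le_ediam_of_mem hy hz)
    calc edist u v = ENNReal.ofReal |u - v| := by rw [edist_dist, Real.dist_eq]
      _ ≤ ENNReal.ofReal (C * |h u - h v| ^ (t : ℝ)) := ENNReal.ofReal_le_ofReal (hsp u hu v hv)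
      _ = ENNReal.ofReal C * edist (h u) (h v) ^ (t : ℝ) := by
          rw [ENNReal.ofReal_mul hC.le, edist_dist, Real.dist_eq,
            ENNReal.ofReal_rpow_of_nonneg (abs_nonneg _) t.coe_nonneg]
      _ ≤ _ := by gcongr
  let G : ℕ → ℝ → ℝ≥0∞ := fun k u => ∑' i, (toMeasurable volume (S k i)).indicator
    (fun _ => Metric.ediam (E k i) ^ (s : ℝ)) u
  have hGm : ∀ k, Measurable (G k) := fun k => by
    refine Measurable.tsum fun i => ?_
    exact measurable_const.indicator (measurableSet_toMeasurable _ _)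
  have hG : ∀ k, ∫⁻ u, G k u ≤ ENNReal.ofReal C * 2⁻¹ ^ k := by
    intro k
    rw [lintegral_tsum fun i =>
      (measurable_const.indicator (measurableSet_toMeasurable _ _)).aemeasurable]
    calc _ ≤ ∑' i, ENNReal.ofReal C * Metric.ediam (E k i) ^ ((s + t : ℝ≥0) : ℝ) := by
          refine ENNReal.tsum_le_tsum fun i => ?_
          rw [lintegral_indicator_const (measurableSet_toMeasurable _ _), measure_toMeasurable,
            NNReal.coe_add, ENNReal.rpow_add_of_nonneg _ _ s.coe_nonneg t.coe_nonneg]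
          calc _ ≤ Metric.ediam (E k i) ^ (s : ℝ) *
                (ENNReal.ofReal C * Metric.ediam (E k i) ^ (t : ℝ)) := by gcongr; exact hS k i
            _ = _ := by ring
      _ ≤ _ := by
          rw [ENNReal.tsum_mul_left]
          gcongr
          exact (hsum k).le
  have hGsum : ∫⁻ u, ∑' k, G k u ≠ ∞ := by
    rw [lintegral_tsum fun k => (hGm k).aemeasurable]
    refine ne_top_of_le_ne_top ?_ (ENNReal.tsum_le_tsum hG)
    rw [ENNReal.tsum_mul_left, ENNReal.tsum_geometric]
    refine ENNReal.mul_ne_top ENNReal.ofReal_ne_top ?_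
    rw [ENNReal.one_sub_inv_two, inv_inv]
    exact ENNReal.ofNat_ne_top
  have hae := ae_lt_top (Measurable.tsum hGm) hGsum
  obtain ⟨u, huI, hu⟩ : ∃ u ∈ I, ∑' k, G k u < ∞ := by
    by_contra hne
    push Not at hne
    have h1 : volume I ≤ volume {u | ¬ ∑' k, G k u < ∞} :=
      measure_mono fun u hu => by simpa using hne u hu
    rw [ae_iff.1 hae, hI, Real.volume_Ico] at h1
    norm_num at h1
  have htend : Tendsto (fun k => G k u) atTop (nhds 0) := by
    rw [← Nat.cofinite_eq_atTop]
    exact ENNReal.tendsto_cofinite_zero_of_tsum_ne_top hu.ne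
  have hslice' : μH[(s : ℝ)] {y | (h u, y) ∈ A} = 0 := by
    have h1 := hausdorffMeasure_le_liminf_tsum (s : ℝ) {y | (h u, y) ∈ A} (l := atTop)
      (fun k : ℕ => ((k : ℝ≥0∞) + 1)⁻¹) ?_ (fun k i => {y | (h u, y) ∈ E k i})
      (Eventually.of_forall fun k i => ?_) (Eventually.of_forall fun k y hy => ?_)
    · refine le_antisymm (h1.trans ?_) zero_le
      rw [← htend.liminf_eq]
      refine liminf_le_liminf (Eventually.of_forall fun k => ENNReal.tsum_le_tsum fun i => ?_)
      rcases Set.eq_empty_or_nonempty {y | (h u, y) ∈ E k i} with he | ⟨y, hy⟩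
      · simp [he, hs]
      · have hmemS : u ∈ S k i := ⟨huI, y, hy⟩
        rw [Set.indicator_of_mem (subset_toMeasurable volume (S k i) hmemS)]
        gcongr
        refine Metric.ediam_le fun y hy z hz => ?_
        exact (le_max_right (edist (h u) (h u)) (edist y z)).trans
          (Metric.edist_le_ediam_of_mem (x := (h u, y)) (y := (h u, z)) hy hz)
    · simp_rw [← Nat.cast_succ]
      exact (tendsto_add_atTop_iff_nat 1).2 ENNReal.tendsto_inv_nat_nhds_zero
    · refine le_trans (Metric.ediam_le fun y hy z hz => ?_) (hdiam k i)
      exact (le_max_right (edist (h u) (h u)) (edist y z)).trans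
        (Metric.edist_le_ediam_of_mem (x := (h u, y)) (y := (h u, z)) hy hz)
    · obtain ⟨i, hi⟩ := Set.mem_iUnion.1 (hE k hy)
      exact Set.mem_iUnion.2 ⟨i, hi⟩
  have h1 := hausdorffMeasure_of_lt_dimH (hslice _ (hmem u huI))
  rw [hslice'] at h1
  exact ENNReal.zero_ne_top h1

end Dimension

section LatticeCount

open Matrix in
/-- Finitely many integer points, not all in a common hyperplane through the origin, are bounded in
number by the largest determinant that three of them span. -/
lemma card_le_of_natAbs_det_le {S : Finset (Fin 3 → ℤ)} {D : ℕ}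
    (hne : ∃ w : Fin 3 → Fin 3 → ℤ, (∀ i, w i ∈ S) ∧ (Matrix.of w).det ≠ 0)
    (hD : ∀ w : Fin 3 → Fin 3 → ℤ, (∀ i, w i ∈ S) → (Matrix.of w).det.natAbs ≤ D) :
    S.card ≤ 27 * D := by
  classical
  obtain ⟨w, hw, hmax⟩ := Finset.exists_max_image (Fintype.piFinset fun _ : Fin 3 => S)
    (fun w => (Matrix.of w).det.natAbs) (by
      obtain ⟨w, hw, -⟩ := hne
      exact ⟨w, Fintype.mem_piFinset.2 hw⟩)
  rw [Fintype.mem_piFinset] at hw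
  set A : Matrix (Fin 3) (Fin 3) ℤ := (Matrix.of w)ᵀ with hA
  have hmax' : ∀ v : Fin 3 → Fin 3 → ℤ, (∀ i, v i ∈ S) →
      (Matrix.of v).det.natAbs ≤ A.det.natAbs := by
    intro v hv
    rw [hA, det_transpose]
    exact hmax v (Fintype.mem_piFinset.2 hv)
  have hd : A.det ≠ 0 := by
    obtain ⟨v, hv, hv0⟩ := hne
    have := hmax' v hv
    omega
  have hinj : Function.Injective A.mulVecLin := by
    intro a b hab
    have h := congrArg (adjugate A *ᵥ ·) hab
    simp only [mulVecLin_apply, mulVec_mulVec, adjugate_mul, smul_mulVec, one_mulVec] at h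
    exact smul_right_injective _ hd h
  set N : Submodule ℤ (Fin 3 → ℤ) := LinearMap.range A.mulVecLin
  let e : (Fin 3 → ℤ) ≃ₗ[ℤ] N := LinearEquiv.ofInjective A.mulVecLin hinj
  have hcard : Nat.card ((Fin 3 → ℤ) ⧸ N) = A.det.natAbs := by
    rw [← Submodule.natAbs_det_equiv N e, ← LinearMap.det_toLin' A]
    rfl
  have hfin : Finite ((Fin 3 → ℤ) ⧸ N) := by
    apply Nat.finite_of_card_ne_zero
    rw [hcard]
    exact Int.natAbs_ne_zero.2 hd
  have := Fintype.ofFinite ((Fin 3 → ℤ) ⧸ N)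
  have hcramer : ∀ P ∈ S, ∀ i, (A.cramer P i).natAbs ≤ A.det.natAbs := by
    intro P hP i
    have : A.cramer P i = (Matrix.of (Function.update w i P)).det := by
      rw [hA, cramer_transpose_apply]
      rfl
    rw [this]
    apply hmax'
    intro j
    rcases eq_or_ne j i with rfl | hji
    · simpa using hP
    · simpa [hji] using hw j
  have hmaps : ∀ P ∈ S, ((Submodule.Quotient.mk P : (Fin 3 → ℤ) ⧸ N), fun i => A.cramer P i / A.det) ∈
      (Finset.univ : Finset ((Fin 3 → ℤ) ⧸ N)) ×ˢ
        Fintype.piFinset fun _ : Fin 3 => Finset.Icc (-1 : ℤ) 1 := by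
    intro P hP
    simp only [Finset.mem_product, Finset.mem_univ, true_and, Fintype.mem_piFinset, Finset.mem_Icc]
    intro i
    have h := hcramer P hP i
    have h1 : |A.cramer P i| ≤ |A.det| := by
      rw [Int.abs_eq_natAbs, Int.abs_eq_natAbs]; exact_mod_cast h
    rcases lt_or_gt_of_ne hd with h0 | h0
    · rw [abs_of_neg h0, abs_le] at h1
      rw [← neg_neg A.det, Int.ediv_neg]
      have h2 : -1 ≤ A.cramer P i / -A.det := by
        rw [Int.le_ediv_iff_mul_le (by omega)]; linarith
      have h3 : A.cramer P i / -A.det ≤ 1 := Int.ediv_le_of_le_mul (by omega) (by linarith)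
      omega
    · rw [abs_of_pos h0, abs_le] at h1
      constructor
      · rw [Int.le_ediv_iff_mul_le h0]; linarith
      · exact Int.ediv_le_of_le_mul h0 (by linarith)
  calc S.card ≤ _ := Finset.card_le_card_of_injOn _ hmaps ?_
    _ = 27 * A.det.natAbs := by
      rw [Finset.card_product, Finset.card_univ, ← Nat.card_eq_fintype_card, hcard,
        Fintype.card_piFinset]
      simp [mul_comm]
    _ ≤ 27 * D := by
      have := hD w hw
      rw [hA, det_transpose]
      omega
  intro P hP Q hQ hPQ
  simp only [Prod.mk.injEq] at hPQ
  obtain ⟨h1, h2⟩ := hPQ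
  rw [Submodule.Quotient.eq] at h1
  obtain ⟨k, hk⟩ := h1
  rw [mulVecLin_apply] at hk
  have h3 : A.cramer P - A.cramer Q = A.det • k := by
    rw [← map_sub, ← hk, cramer_eq_adjugate_mulVec, mulVec_mulVec, adjugate_mul, smul_mulVec,
      one_mulVec]
  have hk0 : k = 0 := by
    ext i
    have h4 := congrFun h3 i
    have h5 := congrFun h2 i
    simp only [Pi.sub_apply, Pi.smul_apply, smul_eq_mul] at h4
    have h6 : A.cramer P i = A.cramer Q i + A.det * k i := by linarith
    simp only [h6, Int.add_mul_ediv_left _ _ hd] at h5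
    simpa using h5
  rw [hk0, mulVec_zero] at hk
  exact (sub_eq_zero.1 hk.symm)

end LatticeCount

section CoplanarPigeonhole

open Matrix in
/-- Vectors of a common plane: if all triples of a family of vectors are dependent then the family is
orthogonal to a nonzero vector. -/
lemma exists_orthogonal_of_det_eq_zero {ι : Type*} {S : Finset ι} {f : ι → Fin 3 → ℝ}
    (h0 : ∀ P ∈ S, f P 0 ≠ 0)
    (hdet : ∀ P ∈ S, ∀ Q ∈ S, ∀ R ∈ S, (Matrix.of ![f P, f Q, f R]).det = 0) (hS : S.Nonempty) :
    ∃ n : Fin 3 → ℝ, n ≠ 0 ∧ ∀ P ∈ S, n 0 * f P 0 + n 1 * f P 1 + n 2 * f P 2 = 0 := by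
  obtain ⟨U, hU⟩ := hS
  by_cases hc : ∀ P ∈ S, ∀ Q ∈ S, crossProduct (f P) (f Q) = 0
  · refine ⟨![-f U 1, f U 0, 0], fun h => h0 U hU (by simpa using congrFun h 1), fun P hP => ?_⟩
    have h := congrFun (hc U hU P hP) 2
    simp only [cross_apply] at h
    simp at h ⊢
    linarith
  · push Not at hc
    obtain ⟨P, hP, Q, hQ, hne⟩ := hc
    refine ⟨_, hne, fun R hR => ?_⟩
    have h := hdet P hP Q hQ R hR
    rw [det_fin_three] at h
    simp [cross_apply] at h ⊢
    linarith

lemma abs_sub_le_of_floor_mul_eq {T a b : ℝ} (hT : 0 < T) (h : ⌊T * a⌋ = ⌊T * b⌋) :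
    |a - b| ≤ 1 / T := by
  have h1 := Int.abs_sub_lt_one_of_floor_eq_floor h
  rw [← mul_sub, abs_mul, abs_of_pos hT] at h1
  rw [le_div_iff₀ hT]
  linarith

/-- Many vectors of a common plane in a box: two of them are close to each other. -/
lemma exists_close_of_det_eq_zero {ι : Type*} {S : Finset ι} {f : ι → Fin 3 → ℝ}
    (hf : ∀ P ∈ S, ∀ k, |f P k| ≤ 2) (h0 : ∀ P ∈ S, f P 0 ≠ 0)
    (hdet : ∀ P ∈ S, ∀ Q ∈ S, ∀ R ∈ S, (Matrix.of ![f P, f Q, f R]).det = 0)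
    {T : ℕ} (hT : 0 < T) (hcard : 25 * T ^ 2 < S.card) :
    ∃ P ∈ S, ∃ Q ∈ S, P ≠ Q ∧ ∀ k, |f P k - f Q k| ≤ 2 / T := by
  classical
  have hT' : (0 : ℝ) < T := by exact_mod_cast hT
  obtain ⟨n, hn, hperp⟩ := exists_orthogonal_of_det_eq_zero h0 hdet
    (Finset.card_pos.1 (by omega))
  obtain ⟨k, -, hk⟩ := Finset.exists_max_image (Finset.univ : Finset (Fin 3)) (fun k => |n k|)
    ⟨0, Finset.mem_univ 0⟩
  have hnk : 0 < |n k| := by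
    rw [abs_pos]
    intro h
    refine hn (funext fun i => ?_)
    have := hk i (Finset.mem_univ i)
    rw [h, abs_zero] at this
    exact abs_nonpos_iff.1 this
  obtain ⟨l, m, hlm⟩ : ∃ l m : Fin 3, ∀ x : Fin 3 → ℝ, x 0 + x 1 + x 2 = x k + x l + x m := by
    fin_cases k
    · exact ⟨1, 2, fun x => rfl⟩
    · exact ⟨0, 2, fun x => by simp; ring⟩
    · exact ⟨0, 1, fun x => by simp; ring⟩
  have hcell : ∀ x : ℝ, |x| ≤ 2 → ⌊T * x⌋ ∈ Finset.Icc (-(2 * T : ℤ)) (2 * T) := by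
    intro x hx
    rw [abs_le] at hx
    rw [Finset.mem_Icc, Int.le_floor, ← Int.lt_add_one_iff, Int.floor_lt]
    push_cast
    constructor <;> nlinarith
  obtain ⟨P, hP, Q, hQ, hPQ, heq⟩ := Finset.exists_ne_map_eq_of_card_lt_of_maps_to
    (s := S) (t := Finset.Icc (-(2 * T : ℤ)) (2 * T) ×ˢ Finset.Icc (-(2 * T : ℤ)) (2 * T))
    (f := fun P => (⌊T * f P l⌋, ⌊T * f P m⌋)) (by
      rw [Finset.card_product, Int.card_Icc]
      have : (2 * T + 1 - -(2 * T : ℤ)).toNat = 4 * T + 1 := by omega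
      rw [this]
      nlinarith)
    (fun P hP => Finset.mem_product.2 ⟨hcell _ (hf P hP l), hcell _ (hf P hP m)⟩)
  rw [Prod.mk.injEq] at heq
  have hl := abs_sub_le_of_floor_mul_eq hT' heq.1
  have hm := abs_sub_le_of_floor_mul_eq hT' heq.2
  have hk' : |f P k - f Q k| ≤ 2 / T := by
    have h1 := hperp P hP
    have h2 := hperp Q hQ
    have h3 := hlm fun i => n i * (f P i - f Q i)
    have h4 : n k * (f P k - f Q k) = -(n l * (f P l - f Q l) + n m * (f P m - f Q m)) := by
      linarith
    have h5 : |n k| * |f P k - f Q k| ≤ |n k| * (2 / T) := by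
      rw [← abs_mul, h4, abs_neg]
      calc _ ≤ |n l| * |f P l - f Q l| + |n m| * |f P m - f Q m| := by
            rw [← abs_mul, ← abs_mul]; exact abs_add_le _ _
        _ ≤ |n k| * (1 / T) + |n k| * (1 / T) := by
            exact add_le_add (mul_le_mul (hk l (Finset.mem_univ l)) hl (abs_nonneg _) hnk.le)
              (mul_le_mul (hk m (Finset.mem_univ m)) hm (abs_nonneg _) hnk.le)
        _ = _ := by ring
    exact le_of_mul_le_mul_left h5 hnk
  refine ⟨P, hP, Q, hQ, hPQ, fun i => ?_⟩
  have hle : (1 : ℝ) / T ≤ 2 / T := by gcongr; norm_num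
  have hi : i = k ∨ i = l ∨ i = m := by
    by_contra h
    push Not at h
    have h1 := hlm (Pi.single i 1)
    have h2 : ∑ j, (Pi.single i 1 : Fin 3 → ℝ) j = 1 := by simp
    rw [Fin.sum_univ_three, h1] at h2
    simp [h.1.symm, h.2.1.symm, h.2.2.symm] at h2
  rcases hi with rfl | rfl | rfl
  · exact hk'
  · exact hl.trans hle
  · exact hm.trans hle

end CoplanarPigeonhole

section RemovedIntervals

/-- The number of intervals of level `n`. -/
abbrev gridSize (R : ℕ → ℕ) (n : ℕ) : ℕ := ∏ i ∈ Finset.range n, R i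

/-- The closed interval of index `a` in the subdivision of the line into intervals of length `1 / N`
meets the closed interval of centre `x` and radius `r`. -/
def Meets (N a : ℕ) (x r : ℝ) : Prop := x - r ≤ ((a : ℝ) + 1) / N ∧ (a : ℝ) / N ≤ x + r

/-- The intervals of level `n + 1` that meet some interval which is to be removed at step `n`. -/
def removed {ι : Type*} (R : ℕ → ℕ) (I : ℕ → ι → Prop) (cen : ι → ℝ) (rad : ℕ → ι → ℝ) (n : ℕ) :
    Set ℕ :=
  {a | ∃ i, I n i ∧ Meets (gridSize R (n + 1)) a (cen i) (rad n i)}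

lemma gridSize_pos {R : ℕ → ℕ} (hR : ∀ n, 0 < R n) (n : ℕ) : 0 < gridSize R n :=
  Finset.prod_pos fun i _ => hR i

lemma gridSize_succ (R : ℕ → ℕ) (n : ℕ) : gridSize R (n + 1) = gridSize R n * R n :=
  Finset.prod_range_succ _ _

/-- An interval meets few intervals of a fine subdivision. -/
lemma card_le_of_meets {N : ℕ} (hN : 0 < N) {x r : ℝ} (hr : 1 ≤ r * N) {B : Finset ℕ}
    (hB : ∀ a ∈ B, Meets N a x r) : (B.card : ℝ) ≤ 4 * r * N := by
  have hN' : (0 : ℝ) < N := by exact_mod_cast hN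
  have hsub : B.image (fun a : ℕ => (a : ℤ)) ⊆ Finset.Icc ⌈(x - r) * N - 1⌉ ⌊(x + r) * N⌋ := by
    intro b hb
    obtain ⟨a, ha, rfl⟩ := Finset.mem_image.1 hb
    obtain ⟨h1, h2⟩ := hB a ha
    rw [le_div_iff₀ hN'] at h1
    rw [div_le_iff₀ hN'] at h2
    rw [Finset.mem_Icc, Int.ceil_le, Int.le_floor]
    push_cast
    constructor <;> linarith
  have hcard := Finset.card_le_card hsub
  rw [Finset.card_image_of_injective _ Nat.cast_injective, Int.card_Icc] at hcard
  have h3 := Int.floor_le ((x + r) * N)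
  have h4 := Int.le_ceil ((x - r) * N - 1)
  have h5 : (B.card : ℝ) ≤ ((⌊(x + r) * N⌋ + 1 - ⌈(x - r) * N - 1⌉).toNat : ℝ) := by
    exact_mod_cast hcard
  have h6 : ((⌊(x + r) * N⌋ + 1 - ⌈(x - r) * N - 1⌉).toNat : ℝ)
      = ((max (⌊(x + r) * N⌋ + 1 - ⌈(x - r) * N - 1⌉) 0 : ℤ) : ℝ) := by
    rw [← Int.toNat_eq_max]; rfl
  rw [h6] at h5
  refine h5.trans ?_
  push_cast
  apply max_le <;> nlinarith

/-- Distinct separated points of an interval are few. -/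
lemma card_le_of_separated {ι : Type*} {F : Finset ι} {x : ι → ℝ} {a b δ : ℝ} (hδ : 0 < δ)
    (hab : a ≤ b) (hx : ∀ i ∈ F, a ≤ x i ∧ x i ≤ b)
    (hsep : ∀ i ∈ F, ∀ j ∈ F, i ≠ j → δ ≤ |x i - x j|) : (F.card : ℝ) ≤ (b - a) / δ + 1 := by
  have hmaps : ∀ i ∈ F, ⌊(x i - a) / δ⌋₊ ∈ Finset.range (⌊(b - a) / δ⌋₊ + 1) := by
    intro i hi
    rw [Finset.mem_range, Nat.lt_succ_iff]
    have := (hx i hi).2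
    gcongr
  have hinj : Set.InjOn (fun i => ⌊(x i - a) / δ⌋₊) F := by
    intro i hi j hj hij
    by_contra hne
    have h1 := hsep i hi j hj hne
    have ha := Nat.floor_le (div_nonneg (sub_nonneg.2 (hx i hi).1) hδ.le)
    have hb := Nat.lt_floor_add_one ((x i - a) / δ)
    have hc := Nat.floor_le (div_nonneg (sub_nonneg.2 (hx j hj).1) hδ.le)
    have hd := Nat.lt_floor_add_one ((x j - a) / δ)
    simp only at hij
    rw [hij] at ha hb
    have h2 : |(x i - a) / δ - (x j - a) / δ| < 1 := by rw [abs_lt]; constructor <;> linarith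
    rw [← sub_div, abs_div, abs_of_pos hδ, div_lt_one hδ] at h2
    rw [sub_sub_sub_cancel_right] at h2
    linarith
  have h := Finset.card_le_card_of_injOn _ hmaps hinj
  rw [Finset.card_range] at h
  calc (F.card : ℝ) ≤ ((⌊(b - a) / δ⌋₊ + 1 : ℕ) : ℝ) := by exact_mod_cast h
    _ ≤ _ := by
      push_cast
      gcongr
      exact Nat.floor_le (div_nonneg (sub_nonneg.2 hab) hδ.le)

/-- A criterion for sparseness: seen from some earlier level, the intervals to be removed have small
total length. -/
lemma sparseBad_removed {ι : Type*} [Nonempty ι] {R : ℕ → ℕ} (hR : ∀ n, 0 < R n) {I : ℕ → ι → Prop} {cen : ι → ℝ}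
    {rad : ℕ → ι → ℝ} (hrad : ∀ n i, I n i → 1 ≤ rad n i * gridSize R (n + 1))
    (h : ∀ n, ∃ m ≤ n, ∀ c, Alive R (removed R I cen rad) m c → ∀ F : Finset ι,
      (∀ i ∈ F, I n i ∧ Meets (gridSize R m) c (cen i) (rad n i)) →
      16 * 2 ^ (n - m) * ∑ i ∈ F, rad n i * gridSize R m ≤ 1) :
    SparseBad R (removed R I cen rad) := by
  classical
  intro n
  obtain ⟨m, hmn, hm⟩ := h n
  refine ⟨m, hmn, fun c hc => ?_⟩
  set Q := ∏ i ∈ Finset.Ico m (n + 1), R i with hQ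
  have hQN : gridSize R (n + 1) = gridSize R m * Q :=
    (Finset.prod_range_mul_prod_Ico _ (by omega)).symm
  have hm0 : (0 : ℝ) < gridSize R m := by exact_mod_cast gridSize_pos hR m
  have hQ0 : (0 : ℝ) < Q := by exact_mod_cast Finset.prod_pos fun i _ => hR i
  set B := (Finset.Ico (c * Q) ((c + 1) * Q)).filter fun b => b ∈ removed R I cen rad n with hB
  have hex : ∀ b ∈ B, ∃ i, I n i ∧ Meets (gridSize R (n + 1)) b (cen i) (rad n i) :=
    fun b hb => (Finset.mem_filter.1 hb).2
  choose! f hf using hex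
  have hmeets : ∀ b ∈ B, Meets (gridSize R m) c (cen (f b)) (rad n (f b)) := by
    intro b hb
    obtain ⟨h1, h2⟩ := (hf b hb).2
    obtain ⟨h3, h4⟩ := Finset.mem_Ico.1 (Finset.mem_filter.1 hb).1
    have h3' : (c : ℝ) * Q ≤ b := by exact_mod_cast h3
    have h4' : (b : ℝ) + 1 ≤ (c + 1) * Q := by exact_mod_cast h4
    rw [hQN, Nat.cast_mul] at h1 h2
    constructor
    · refine h1.trans ?_
      rw [div_le_div_iff₀ (by positivity) hm0]
      nlinarith
    · refine le_trans ?_ h2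
      rw [div_le_div_iff₀ hm0 (by positivity)]
      nlinarith
  have key := hm c hc (B.image f) (by
    intro i hi
    obtain ⟨b, hb, rfl⟩ := Finset.mem_image.1 hi
    exact ⟨(hf b hb).1, hmeets b hb⟩)
  have hcard : (B.card : ℝ) ≤ ∑ i ∈ B.image f, 4 * rad n i * gridSize R (n + 1) := by
    rw [Finset.card_eq_sum_card_image f B]
    push_cast
    refine Finset.sum_le_sum fun i hi => ?_
    obtain ⟨b, hb, rfl⟩ := Finset.mem_image.1 hi
    have := card_le_of_meets (gridSize_pos hR (n + 1)) (hrad n _ (hf b hb).1)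
      (x := cen (f b)) (B := B.filter fun b' => f b' = f b) (by
        intro b' hb'
        rw [Finset.mem_filter] at hb'
        have hfb := hb'.2
        rw [← hfb]
        exact (hf b' hb'.1).2)
    exact_mod_cast this
  have hfinal : (4 * 2 ^ (n - m) * B.card : ℝ) ≤ Q := by
    calc (4 * 2 ^ (n - m) * B.card : ℝ)
        ≤ 4 * 2 ^ (n - m) * ∑ i ∈ B.image f, 4 * rad n i * gridSize R (n + 1) := by gcongr
      _ = (16 * 2 ^ (n - m) * ∑ i ∈ B.image f, rad n i * gridSize R m) * Q := by
        rw [hQN, Finset.mul_sum, Finset.mul_sum, Finset.sum_mul]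
        refine Finset.sum_congr rfl fun i _ => ?_
        push_cast
        ring
      _ ≤ 1 * Q := by gcongr
      _ = Q := one_mul _
  exact_mod_cast hfinal

/-- A point of an alive interval is far from the centres of the intervals removed before. -/
lemma lt_abs_sub_of_alive {ι : Type*} {R : ℕ → ℕ} (hR : ∀ n, 0 < R n) {I : ℕ → ι → Prop}
    {cen : ι → ℝ} {rad : ℕ → ι → ℝ} {n : ℕ} {i : ι} (hi : I n i) {z : ℝ} :
    ∀ {k a : ℕ}, n < k → Alive R (removed R I cen rad) k a → (a : ℝ) / gridSize R k ≤ z →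
      z ≤ ((a : ℝ) + 1) / gridSize R k → rad n i < |z - cen i| := by
  intro k
  induction k with
  | zero => intro a h; omega
  | succ k ih =>
    intro a hnk ha h1 h2
    have hk0 : (0 : ℝ) < gridSize R k := by exact_mod_cast gridSize_pos hR k
    have hR0 : (0 : ℝ) < R k := by exact_mod_cast hR k
    rcases (Nat.lt_succ_iff.1 hnk).eq_or_lt with rfl | hlt
    · by_contra! hle
      rw [abs_le] at hle
      exact ha.2 ⟨i, hi, by linarith, by linarith⟩
    · refine ih hlt ha.1 (le_trans ?_ h1) (h2.trans ?_)
      · rw [gridSize_succ, div_le_div_iff₀ hk0 (by exact_mod_cast Nat.mul_pos (gridSize_pos hR k) (hR k))]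
        have : ((a / R k : ℕ) : ℝ) * R k ≤ a := by exact_mod_cast Nat.div_mul_le_self a (R k)
        push_cast at *
        nlinarith
      · rw [gridSize_succ, div_le_div_iff₀ (by exact_mod_cast Nat.mul_pos (gridSize_pos hR k) (hR k)) hk0]
        have : (a : ℝ) + 1 ≤ (((a / R k : ℕ) : ℝ) + 1) * R k := by
          exact_mod_cast Nat.lt_mul_of_div_lt (Nat.lt_succ_self _) (hR k)
        push_cast at *
        nlinarith

end RemovedIntervals

section BadlyApproximable

lemma gridSize_mono {R : ℕ → ℕ} (hR : ∀ n, 0 < R n) : Monotone (gridSize R) :=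
  monotone_nat_of_le_succ fun n => by
    rw [gridSize_succ]
    exact Nat.le_mul_of_pos_right _ (hR n)

lemma two_pow_le_gridSize {R : ℕ → ℕ} (hR : ∀ n, 2 ≤ R n) (n : ℕ) : 2 ^ n ≤ gridSize R n := by
  simpa using Finset.pow_card_le_prod (Finset.range n) R 2 fun i _ => hR i

/-- Every number `N ≥ 1` falls between two consecutive grid sizes. -/
lemma exists_gridSize_le_lt {R : ℕ → ℕ} (hR : ∀ n, 2 ≤ R n) {N : ℕ} (hN : 0 < N) :
    ∃ n, gridSize R n ≤ N ∧ N < gridSize R (n + 1) := by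
  have hex : ∃ n, N < gridSize R (n + 1) :=
    ⟨N, (Nat.lt_two_pow_self).trans_le ((two_pow_le_gridSize hR N).trans
      (gridSize_mono (fun n => by have := hR n; omega) (Nat.le_succ N)))⟩
  classical
  refine ⟨Nat.find hex, ?_, Nat.find_spec hex⟩
  rcases hk : Nat.find hex with _ | k
  · simpa [gridSize, Nat.one_le_iff_ne_zero, Nat.pos_iff_ne_zero] using hN
  · have := Nat.find_min hex (m := k) (by omega)
    omega

lemma abs_sub_ge_of_ne {r s : ℚ} (h : r ≠ s) : 1 / ((r.den : ℝ) * s.den) ≤ |(r : ℝ) - s| := by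
  have hr : (0 : ℝ) < r.den := by exact_mod_cast r.den_pos
  have hs : (0 : ℝ) < s.den := by exact_mod_cast s.den_pos
  have h1 : (r : ℝ) - s = (r.num * s.den - s.num * r.den : ℤ) / (r.den * s.den) := by
    rw [Rat.cast_def r, Rat.cast_def s]
    push_cast
    field_simp
  have h2 : (r.num * s.den - s.num * r.den : ℤ) ≠ 0 := by
    intro h0
    apply sub_ne_zero.2 h
    have h3 : (r : ℝ) - s = 0 := by rw [h1, h0]; simp
    exact_mod_cast h3
  rw [h1, abs_div, abs_of_pos (mul_pos hr hs)]
  gcongr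
  exact_mod_cast Int.one_le_abs h2

lemma nint_eq_abs_sub (x : ℝ) {q : ℝ} (hq : 0 < q) : nint (q * x) = q * |x - round (q * x) / q| := by
  rw [nint, ← abs_of_pos hq, ← abs_mul, abs_of_pos hq, mul_sub, mul_div_cancel₀ _ hq.ne']

theorem isSpread_badlyApproximable {s : ℝ} (hs : 0 < s) (hs1 : s < 1) :
    IsSpread s {θ : ℝ | ∃ c : ℝ, 0 < c ∧ ∀ q : ℕ, 0 < q → c ≤ (q : ℝ) * nint (q * θ)} := by
  obtain ⟨e₀, he₀⟩ := exists_nat_ge (3 / (1 - s))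
  set e := e₀ + 7
  have he : s * e ≤ e - 3 := by
    rw [div_le_iff₀ (by linarith)] at he₀
    simp only [e]; push_cast
    nlinarith
  set R : ℕ → ℕ := fun _ => 2 ^ e with hR
  have hRe : 2 ^ 7 ≤ 2 ^ e := Nat.pow_le_pow_right (by norm_num) (by omega)
  have hR2 : ∀ n, 2 ≤ R n := fun n => by simp only [hR]; omega
  have hR0 : ∀ n, 0 < R n := fun n => by simp only [hR]; omega
  set I : ℕ → ℚ → Prop := fun n r =>
    gridSize R n ≤ 64 * r.den ^ 2 ∧ 64 * r.den ^ 2 < gridSize R (n + 1) with hI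
  set rad : ℕ → ℚ → ℝ := fun n _ => 1 / gridSize R (n + 1) with hrad
  have hpos : ∀ n, (0 : ℝ) < gridSize R n := fun n => by exact_mod_cast gridSize_pos hR0 n
  have hsucc : ∀ n, (gridSize R (n + 1) : ℝ) = gridSize R n * 2 ^ e := fun n => by
    rw [gridSize_succ]; simp [hR]
  have hsparse : SparseBad R (removed R I (fun r => (r : ℝ)) rad) := by
    refine sparseBad_removed hR0 (fun n r _ => ?_) fun n => ⟨n, le_rfl, fun c _ F hF => ?_⟩
    · simp only [hrad]
      rw [one_div_mul_cancel (hpos _).ne']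
    · have hcard := card_le_of_separated (F := F) (x := fun r : ℚ => (r : ℝ))
        (a := c / gridSize R n - 1 / gridSize R (n + 1))
        (b := (c + 1) / gridSize R n + 1 / gridSize R (n + 1)) (δ := 64 / gridSize R (n + 1))
        (div_pos (by norm_num) (hpos _)) (by
          have := hpos n
          have := hpos (n + 1)
          rw [add_div]
          have h1 : 0 ≤ 1 / (gridSize R n : ℝ) := by positivity
          have h2 : 0 ≤ 1 / (gridSize R (n + 1) : ℝ) := by positivity
          linarith)
        (fun r hr => by
          obtain ⟨-, h1, h2⟩ := hF r hr
          constructor <;> simp only [hrad] at h1 h2 <;> linarith)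
        (fun r hr r' hr' hne => by
          refine le_trans ?_ (abs_sub_ge_of_ne hne)
          have h1 := (hF r hr).1.2
          have h2 := (hF r' hr').1.2
          have h3 : (64 * (r.den * r'.den : ℕ) : ℝ) ≤ gridSize R (n + 1) := by
            have : 64 * (r.den * r'.den) ≤ gridSize R (n + 1) := by
              zify at h1 h2 ⊢
              nlinarith [sq_nonneg ((r.den : ℤ) - r'.den)]
            exact_mod_cast this
          have h4 : (0 : ℝ) < r.den := by exact_mod_cast r.den_pos
          have h5 : (0 : ℝ) < r'.den := by exact_mod_cast r'.den_pos
          rw [div_le_div_iff₀ (hpos _) (by positivity)]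
          rw [Nat.cast_mul] at h3
          linarith)
      have hE : ((c + 1) / gridSize R n + 1 / gridSize R (n + 1)
          - (c / gridSize R n - 1 / gridSize R (n + 1))) / (64 / gridSize R (n + 1)) + 1
          = ((2 : ℝ) ^ e + 66) / 64 := by
        have := hpos n
        rw [hsucc]
        field_simp
        ring
      rw [hE] at hcard
      have hRe' : (2 : ℝ) ^ 7 ≤ 2 ^ e := by exact_mod_cast hRe
      have hq : 1 / (gridSize R (n + 1) : ℝ) * gridSize R n = 1 / 2 ^ e := by
        have := hpos n
        rw [hsucc]
        field_simp
      simp only [hrad, Finset.sum_const, nsmul_eq_mul, Nat.sub_self, pow_zero, hq]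
      rw [mul_one_div, ← mul_div_assoc, div_le_one (by positivity)]
      linarith
  refine isSpread_of_sparseBad (R := R) (fun n => by simp only [hR]; omega) hsparse hs
    (C := 2 ^ (e - 3)) (by positivity) (fun n => ?_) fun z hz => ?_
  · have h8 : 2 ^ e / 8 = 2 ^ (e - 3) := by
      rw [show (8 : ℕ) = 2 ^ 3 by norm_num, Nat.pow_div (by omega) (by norm_num)]
    simp only [hR, Finset.prod_const, Finset.card_range, h8]
    push_cast
    rw [← pow_succ', ← pow_mul, ← pow_mul, ← Real.rpow_natCast, ← Real.rpow_mul (by norm_num),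
      ← Real.rpow_natCast]
    apply Real.rpow_le_rpow_of_exponent_le (by norm_num)
    push_cast [show 3 ≤ e by omega]
    nlinarith [mul_le_mul_of_nonneg_right he (by positivity : (0 : ℝ) ≤ n + 1)]
  · refine ⟨1 / (64 * 2 ^ e), by positivity, fun q hq => ?_⟩
    have hq' : (0 : ℝ) < q := by exact_mod_cast hq
    set r : ℚ := (round (q * z) : ℤ) / (q : ℚ) with hr
    have hden : r.den ≤ q := by
      have h := Rat.den_dvd (round (q * z)) q
      rw [Rat.divInt_eq_div, Int.cast_natCast] at h
      exact Nat.le_of_dvd hq (Int.natCast_dvd_natCast.1 h)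
    obtain ⟨n, hn1, hn2⟩ := exists_gridSize_le_lt hR2 (N := 64 * r.den ^ 2)
      (by have := r.den_pos; positivity)
    obtain ⟨a, ha, h1, h2⟩ := hz (n + 1)
    have h3 := lt_abs_sub_of_alive hR0 (I := I) (rad := rad) ⟨hn1, hn2⟩ (Nat.lt_succ_self n) ha h1 h2
    have h4 : (gridSize R (n + 1) : ℝ) ≤ 64 * 2 ^ e * q ^ 2 := by
      rw [hsucc]
      have h5 : (gridSize R n : ℝ) ≤ 64 * r.den ^ 2 := by exact_mod_cast hn1
      have h6 : (r.den : ℝ) ≤ q := by exact_mod_cast hden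
      calc (gridSize R n : ℝ) * 2 ^ e ≤ 64 * q ^ 2 * 2 ^ e := by
            gcongr; exact h5.trans (by gcongr)
        _ = _ := by ring
    have h7 : (r : ℝ) = round (q * z) / q := by simp [hr]
    rw [nint_eq_abs_sub z hq', ← h7]
    simp only [hrad] at h3
    calc (1 : ℝ) / (64 * 2 ^ e) = q * (q * (1 / (64 * 2 ^ e * q ^ 2))) := by field_simp
      _ ≤ q * (q * (1 / (gridSize R (n + 1) : ℝ))) := by
        have := hpos (n + 1)
        gcongr
      _ ≤ _ := by gcongr

end BadlyApproximable

section BoxCount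

lemma nint_nonneg (x : ℝ) : 0 ≤ nint x := abs_nonneg _

lemma nint_le_half (x : ℝ) : nint x ≤ 1 / 2 := abs_sub_round x

lemma nint_le_abs_sub (x : ℝ) (z : ℤ) : nint x ≤ |x - z| := round_le x z

/-- The normalized height of a denominator. -/
noncomputable def height (θ c : ℝ) (x : ℕ) : ℝ := (x : ℝ) ^ 2 * nint (x * θ) / c

variable {θ c : ℝ}

lemma le_height (hc : 0 < c) (hbad : ∀ q : ℕ, 0 < q → c ≤ (q : ℝ) * nint (q * θ)) {x : ℕ}
    (hx : 0 < x) : (x : ℝ) ≤ height θ c x := by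
  rw [height, le_div_iff₀ hc]
  have := mul_le_mul_of_nonneg_left (hbad x hx) (Nat.cast_nonneg (α := ℝ) x)
  linarith

lemma nint_lt_of_height_lt (hc : 0 < c) {X A : ℝ} (hX : 0 < X) {x : ℕ} (hx : X ≤ x)
    (h : height θ c x < 2 * A) : nint (x * θ) ≤ 2 * c * A / X ^ 2 := by
  rw [height, div_lt_iff₀ hc] at h
  rw [le_div_iff₀ (by positivity)]
  calc nint (x * θ) * X ^ 2 ≤ nint (x * θ) * x ^ 2 := by
        have := nint_nonneg (x * θ)
        gcongr
    _ ≤ _ := by linarith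

/-- In a long box the points are counted first by denominators and then by numerators. -/
lemma card_le_of_one_le (hc : 0 < c) (hbad : ∀ q : ℕ, 0 < q → c ≤ (q : ℝ) * nint (q * θ))
    {X A ℓ β : ℝ} (hX : 0 < X) (hXA : X ≤ A) (hXℓ : 1 ≤ X * ℓ) {G : Finset (ℤ × ℕ)}
    (hG : ∀ P ∈ G, X ≤ P.2 ∧ (P.2 : ℝ) < 2 * X ∧ height θ c P.2 < 2 * A ∧
      |P.2 * β - P.1| ≤ 2 * X * ℓ) :
    (G.card : ℝ) ≤ 25 * (A * ℓ) := by
  classical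
  have hA : 0 < A := hX.trans_le hXA
  have hden : ((G.image Prod.snd).card : ℝ) ≤ 5 * A / X := by
    have h := card_le_of_separated (F := G.image Prod.snd) (x := fun q : ℕ => (q : ℝ)) (a := X)
      (b := 2 * X) (δ := X ^ 2 / (4 * A)) (by positivity) (by linarith) (by
        intro q hq
        obtain ⟨P, hP, rfl⟩ := Finset.mem_image.1 hq
        exact ⟨(hG P hP).1, (hG P hP).2.1.le⟩) (by
        have key : ∀ q ∈ G.image Prod.snd, ∀ q' ∈ G.image Prod.snd, q' < q →
            X ^ 2 / (4 * A) ≤ (q : ℝ) - q' := by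
          intro q hq q' hq' hlt
          obtain ⟨P, hP, rfl⟩ := Finset.mem_image.1 hq
          obtain ⟨P', hP', rfl⟩ := Finset.mem_image.1 hq'
          have h1 := nint_lt_of_height_lt hc hX (hG P hP).1 (hG P hP).2.2.1
          have h2 := nint_lt_of_height_lt hc hX (hG P' hP').1 (hG P' hP').2.2.1
          have h3 := hbad (P.2 - P'.2) (by omega)
          rw [Nat.cast_sub hlt.le] at h3
          have h4 := nint_le_abs_sub (((P.2 : ℝ) - P'.2) * θ) (round (P.2 * θ) - round (P'.2 * θ))
          have h5 : |((P.2 : ℝ) - P'.2) * θ - (round (P.2 * θ) - round (P'.2 * θ) : ℤ)|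
              ≤ nint (P.2 * θ) + nint (P'.2 * θ) := by
            rw [nint, nint, show ((P.2 : ℝ) - P'.2) * θ - (round (P.2 * θ) - round (P'.2 * θ) : ℤ)
              = (P.2 * θ - round (P.2 * θ)) - (P'.2 * θ - round (P'.2 * θ)) by push_cast; ring]
            exact abs_sub _ _
          have h6 : (0 : ℝ) < P.2 - P'.2 := by rw [sub_pos]; exact_mod_cast hlt
          have h7 : c ≤ ((P.2 : ℝ) - P'.2) * (4 * c * A / X ^ 2) :=
            h3.trans (mul_le_mul_of_nonneg_left ((h4.trans h5).trans (by
              rw [show 4 * c * A / X ^ 2 = 2 * c * A / X ^ 2 + 2 * c * A / X ^ 2 by ring]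
              linarith)) h6.le)
          rw [div_le_iff₀ (by positivity)]
          rw [← mul_div_assoc, le_div_iff₀ (by positivity)] at h7
          have h8 : c * X ^ 2 ≤ c * (((P.2 : ℝ) - P'.2) * (4 * A)) := by linarith
          exact le_of_mul_le_mul_left h8 hc
        intro q hq q' hq' hne
        rcases lt_or_gt_of_ne hne with hlt | hlt
        · rw [abs_sub_comm]
          exact (key q' hq' q hq hlt).trans (le_abs_self _)
        · exact (key q hq q' hq' hlt).trans (le_abs_self _))
    refine h.trans ?_
    have h1 : 1 ≤ A / X := by rwa [le_div_iff₀ hX, one_mul]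
    have h2 : (2 * X - X) / (X ^ 2 / (4 * A)) = 4 * (A / X) := by field_simp; ring
    rw [h2, mul_div_assoc]
    linarith
  have hnum : ∀ q ∈ G.image Prod.snd, ((G.filter fun P => P.2 = q).card : ℝ) ≤ 5 * (X * ℓ) := by
    intro q hq
    have h := card_le_of_separated (F := G.filter fun P => P.2 = q)
      (x := fun P : ℤ × ℕ => (P.1 : ℝ)) (a := q * β - 2 * X * ℓ)
      (b := q * β + 2 * X * ℓ) (δ := 1) one_pos (by linarith) (by
        intro P hP
        rw [Finset.mem_filter] at hP
        have h1 := (hG P hP.1).2.2.2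
        rw [hP.2, abs_le] at h1
        constructor <;> linarith) (by
        intro P hP P' hP' hne
        rw [Finset.mem_filter] at hP hP'
        have h1 : P.1 ≠ P'.1 := fun h => hne (Prod.ext h (hP.2.trans hP'.2.symm))
        have h2 := Int.one_le_abs (sub_ne_zero.2 h1)
        exact_mod_cast h2)
    linarith
  calc (G.card : ℝ) = ∑ q ∈ G.image Prod.snd, ((G.filter fun P => P.2 = q).card : ℝ) := by
        rw [Finset.card_eq_sum_card_image Prod.snd G]
        push_cast
        rfl
    _ ≤ (G.image Prod.snd).card • (5 * (X * ℓ)) := Finset.sum_le_card_nsmul _ _ _ hnum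
    _ ≤ 5 * A / X * (5 * (X * ℓ)) := by
        rw [nsmul_eq_mul]
        gcongr
    _ = 25 * (A * ℓ) := by field_simp; ring

lemma abs_det_le {M : Matrix (Fin 3) (Fin 3) ℝ} (h : ∀ i, |M i 0| ≤ 2 ∧ |M i 1| ≤ 1 ∧ |M i 2| ≤ 1) :
    |M.det| ≤ 12 := by
  have key : ∀ i j k, |M i 0 * M j 1 * M k 2| ≤ 2 := by
    intro i j k
    rw [abs_mul, abs_mul]
    calc |M i 0| * |M j 1| * |M k 2| ≤ 2 * 1 * 1 := by
          gcongr
          exacts [(h i).1, (h j).2.1, (h k).2.2]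
      _ = 2 := by norm_num
  have h1 := abs_le.1 (key 0 1 2)
  have h2 := abs_le.1 (key 0 2 1)
  have h3 := abs_le.1 (key 1 0 2)
  have h4 := abs_le.1 (key 1 2 0)
  have h5 := abs_le.1 (key 2 0 1)
  have h6 := abs_le.1 (key 2 1 0)
  rw [Matrix.det_fin_three, abs_le]
  constructor <;> nlinarith

end BoxCount

section ShortBoxCount

variable {θ c : ℝ}

/-- The integer point of the space attached to the fraction `p / x`. -/
noncomputable def latticePoint (θ : ℝ) (P : ℤ × ℕ) : Fin 3 → ℤ := ![P.2, round (P.2 * θ), P.1]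

/-- The coordinates of the lattice point in a box of sizes `X`, `ε` and `η`. -/
noncomputable def boxPoint (θ β X ε η : ℝ) (P : ℤ × ℕ) : Fin 3 → ℝ :=
  ![P.2 / X, (P.2 * θ - round (P.2 * θ)) / ε, (P.2 * β - P.1) / η]

lemma latticePoint_injective (θ : ℝ) : Function.Injective (latticePoint θ) := by
  intro P Q h
  have h0 := congrFun h 0
  have h2 := congrFun h 2
  simp [latticePoint] at h0 h2
  exact Prod.ext h2 h0

lemma det_boxPoint (θ β : ℝ) {X ε η : ℝ} (hX : 0 < X) (hε : 0 < ε) (hη : 0 < η) (P Q R : ℤ × ℕ) :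
    (Matrix.of ![boxPoint θ β X ε η P, boxPoint θ β X ε η Q, boxPoint θ β X ε η R]).det
      * (X * ε * η) =
    ((Matrix.of ![latticePoint θ P, latticePoint θ Q, latticePoint θ R]).det : ℤ) := by
  rw [Matrix.det_fin_three, Matrix.det_fin_three]
  simp [boxPoint, latticePoint]
  field_simp
  ring

/-- In a short box either there are few points or some small denominator is far from being badly
approximable. -/
lemma card_le_or_exists (hc : 0 < c) (hc2 : c ≤ 1 / 2) {X A ℓ β : ℝ} (hX : 0 < X) (hA : 0 < A)
    (hℓ : 0 < ℓ) (hXℓ : X * ℓ < 1) {G : Finset (ℤ × ℕ)}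
    (hG : ∀ P ∈ G, X ≤ P.2 ∧ (P.2 : ℝ) < 2 * X ∧ A ≤ height θ c P.2 ∧ height θ c P.2 < 2 * A ∧
      |P.2 * β - P.1| ≤ 2 * X * ℓ) {T : ℕ} (hT : 9 ≤ T) (hTA : (T : ℝ) ^ 2 ≤ A * ℓ) :
    (G.card : ℝ) ≤ 648 * (A * ℓ) ∨ ∃ (d : ℕ) (p : ℤ), 0 < d ∧ height θ c d ≤ 16 * A / T ^ 3 ∧
      d * nint (d * θ) / c * |d * β - p| ≤ 32 * (A * ℓ) / T ^ 3 := by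
  classical
  set ε := 2 * c * A / X ^ 2 with hε
  have hε0 : 0 < ε := by positivity
  set η := 2 * X * ℓ with hη
  have hη0 : 0 < η := by positivity
  set f := boxPoint θ β X ε η with hf
  have hbox : ∀ P ∈ G, |f P 0| ≤ 2 ∧ |f P 1| ≤ 1 ∧ |f P 2| ≤ 1 := by
    intro P hP
    obtain ⟨h1, h2, h3, h4, h5⟩ := hG P hP
    refine ⟨?_, ?_, ?_⟩
    · simp only [hf, boxPoint, Matrix.cons_val_zero]
      rw [abs_of_nonneg (by positivity), div_le_iff₀ hX]
      exact h2.le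
    · simp only [hf, boxPoint, Matrix.cons_val_one, Matrix.cons_val_zero]
      rw [abs_div, abs_of_pos hε0, div_le_one hε0]
      exact nint_lt_of_height_lt hc hX h1 h4
    · simp only [hf, boxPoint, Matrix.cons_val_two, Matrix.tail_cons, Matrix.head_cons]
      rw [abs_div, abs_of_pos hη0, div_le_one hη0]
      exact h5
  have hvol : X * ε * η = 4 * c * (A * ℓ) := by
    simp only [hε, hη]
    field_simp
    ring
  have hdet : ∀ P ∈ G, ∀ Q ∈ G, ∀ R ∈ G,
      |((Matrix.of ![latticePoint θ P, latticePoint θ Q, latticePoint θ R]).det : ℝ)|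
        ≤ 24 * (A * ℓ) := by
    intro P hP Q hQ R hR
    rw [← det_boxPoint θ β hX hε0 hη0, abs_mul, hvol, abs_of_pos (a := 4 * c * (A * ℓ)) (by positivity)]
    have h := abs_det_le (M := Matrix.of ![f P, f Q, f R]) (by
      intro i
      fin_cases i
      exacts [hbox P hP, hbox Q hQ, hbox R hR])
    calc _ ≤ 12 * (4 * (1 / 2) * (A * ℓ)) := by gcongr
      _ = _ := by ring
  by_cases hne : ∃ P ∈ G, ∃ Q ∈ G, ∃ R ∈ G,
      (Matrix.of ![latticePoint θ P, latticePoint θ Q, latticePoint θ R]).det ≠ 0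
  · left
    have h := card_le_of_natAbs_det_le (S := G.image (latticePoint θ)) (D := ⌊24 * (A * ℓ)⌋₊) (by
      obtain ⟨P, hP, Q, hQ, R, hR, h⟩ := hne
      refine ⟨_, fun i => ?_, h⟩
      fin_cases i
      exacts [Finset.mem_image_of_mem _ hP, Finset.mem_image_of_mem _ hQ,
        Finset.mem_image_of_mem _ hR]) (by
      intro w hw
      have h0 := hw 0
      have h1 := hw 1
      have h2 := hw 2
      simp only [Finset.mem_image] at h0 h1 h2
      obtain ⟨P, hP, h0⟩ := h0
      obtain ⟨Q, hQ, h1⟩ := h1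
      obtain ⟨R, hR, h2⟩ := h2
      have hw' : w = ![latticePoint θ P, latticePoint θ Q, latticePoint θ R] := by
        funext i
        fin_cases i
        exacts [h0.symm, h1.symm, h2.symm]
      rw [hw']
      apply Nat.le_floor
      rw [Nat.cast_natAbs, Int.cast_abs]
      exact hdet P hP Q hQ R hR)
    rw [Finset.card_image_of_injective _ (latticePoint_injective θ)] at h
    have h1 := Nat.floor_le (a := 24 * (A * ℓ)) (by positivity)
    have h2 : (G.card : ℝ) ≤ 27 * ⌊24 * (A * ℓ)⌋₊ := by exact_mod_cast h
    linarith
  push Not at hne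
  by_cases hcard : G.card ≤ 25 * T ^ 2
  · left
    have h1 : (G.card : ℝ) ≤ 25 * T ^ 2 := by exact_mod_cast hcard
    nlinarith
  right
  have hT0 : (0 : ℝ) < T := by exact_mod_cast (by omega : 0 < T)
  have hT9 : (9 : ℝ) ≤ T := by exact_mod_cast hT
  obtain ⟨P, hP, Q, hQ, hPQ, hclose⟩ := exists_close_of_det_eq_zero (S := G) (f := f)
    (by
      intro P hP k
      obtain ⟨h1, h2, h3⟩ := hbox P hP
      fin_cases k
      exacts [h1, h2.trans (by norm_num), h3.trans (by norm_num)])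
    (by
      intro P hP h
      simp only [hf, boxPoint, Matrix.cons_val_zero] at h
      have h1 := (hG P hP).1
      have h2 : (0 : ℝ) < P.2 / X := div_pos (hX.trans_le h1) hX
      linarith)
    (by
      intro P hP Q hQ R hR
      have h := det_boxPoint θ β hX hε0 hη0 P Q R
      rw [hne P hP Q hQ R hR, Int.cast_zero, hvol] at h
      exact (mul_eq_zero.1 h).resolve_right (by positivity)) (by omega) (not_le.1 hcard)
  set dx : ℤ := (P.2 : ℤ) - Q.2 with hdx
  set dy : ℤ := round (P.2 * θ) - round (Q.2 * θ) with hdy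
  set dp : ℤ := P.1 - Q.1 with hdp
  have hx : |(dx : ℝ)| ≤ 2 * X / T := by
    have h := hclose 0
    simp only [hf, boxPoint, Matrix.cons_val_zero] at h
    rw [← sub_div, abs_div, abs_of_pos hX, div_le_iff₀ hX] at h
    calc |(dx : ℝ)| = |(P.2 : ℝ) - Q.2| := by simp [hdx]
      _ ≤ _ := h
      _ = _ := by ring
  have hy : |dx * θ - dy| ≤ 2 * ε / T := by
    have h := hclose 1
    simp only [hf, boxPoint, Matrix.cons_val_one, Matrix.cons_val_zero] at h
    rw [← sub_div, abs_div, abs_of_pos hε0, div_le_iff₀ hε0] at h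
    calc |dx * θ - dy| = |P.2 * θ - round (P.2 * θ) - (Q.2 * θ - round (Q.2 * θ))| := by
          congr 1; simp [hdx, hdy]; ring
      _ ≤ _ := h
      _ = _ := by ring
  have hp : |dx * β - dp| ≤ 2 * η / T := by
    have h := hclose 2
    simp only [hf, boxPoint, Matrix.cons_val_two, Matrix.tail_cons, Matrix.head_cons] at h
    rw [← sub_div, abs_div, abs_of_pos hη0, div_le_iff₀ hη0] at h
    calc |dx * β - dp| = |P.2 * β - P.1 - (Q.2 * β - Q.1)| := by
          congr 1; simp [hdx, hdp]; ring
      _ ≤ _ := h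
      _ = _ := by ring
  have hε4 : ε ≤ 4 := by
    obtain ⟨h1, h2, h3, -⟩ := hG P hP
    rw [height, le_div_iff₀ hc] at h3
    rw [hε, div_le_iff₀ (by positivity)]
    have h4 := nint_le_half (P.2 * θ)
    have h5 := nint_nonneg (P.2 * θ)
    have h6 : (P.2 : ℝ) ^ 2 * nint (P.2 * θ) ≤ (2 * X) ^ 2 * (1 / 2) := by gcongr
    nlinarith
  have hdx0 : dx ≠ 0 := by
    intro h0
    rw [h0] at hy hp
    have h1 : dy = 0 := by
      rw [← Int.abs_lt_one_iff]
      have : |(dy : ℝ)| < 1 := by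
        calc |(dy : ℝ)| ≤ 2 * ε / T := by simpa using hy
          _ < 1 := by rw [div_lt_one hT0]; linarith
      exact_mod_cast this
    have h2 : dp = 0 := by
      rw [← Int.abs_lt_one_iff]
      have : |(dp : ℝ)| < 1 := by
        calc |(dp : ℝ)| ≤ 2 * η / T := by simpa using hp
          _ < 1 := by rw [div_lt_one hT0]; nlinarith
      exact_mod_cast this
    apply hPQ
    refine Prod.ext ?_ ?_ <;> omega
  have hd : (dx.natAbs : ℝ) = |(dx : ℝ)| := by rw [Nat.cast_natAbs, Int.cast_abs]
  have hd0 : 0 < dx.natAbs := Int.natAbs_pos.2 hdx0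
  obtain ⟨p, y, hp', hy'⟩ : ∃ p y : ℤ, |dx.natAbs * β - p| ≤ 2 * η / T ∧
      |dx.natAbs * θ - y| ≤ 2 * ε / T := by
    rw [hd]
    rcases abs_cases (dx : ℝ) with ⟨h, -⟩ | ⟨h, -⟩
    · rw [h]; exact ⟨dp, dy, hp, hy⟩
    · rw [h]
      refine ⟨-dp, -dy, ?_, ?_⟩
      · rw [← abs_neg]; convert hp using 2; push_cast; ring
      · rw [← abs_neg]; convert hy using 2; push_cast; ring
  rw [← hd] at hx
  have hn := (nint_le_abs_sub (dx.natAbs * θ) y).trans hy'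
  have hn0 := nint_nonneg (dx.natAbs * θ)
  refine ⟨dx.natAbs, p, hd0, ?_, ?_⟩
  · calc height θ c dx.natAbs ≤ (2 * X / T) ^ 2 * (2 * ε / T) / c := by
          rw [height]; gcongr
      _ = 16 * A / T ^ 3 := by rw [hε]; field_simp; ring
  · calc dx.natAbs * nint (dx.natAbs * θ) / c * |dx.natAbs * β - p|
        ≤ (2 * X / T) * (2 * ε / T) / c * (2 * η / T) := by gcongr
      _ = 32 * (A * ℓ) / T ^ 3 := by rw [hε, hη]; field_simp; ring

end ShortBoxCount

section Parameters

/-- The binary logarithm of the number of children of a node of level `n`. -/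
def logStep (n : ℕ) : ℕ := 100 + 4 * Nat.log 2 (n + 1)

/-- The binary logarithm of the number of intervals of level `n`. -/
def logGrid (n : ℕ) : ℕ := ∑ i ∈ Finset.range n, logStep i

lemma logStep_mono : Monotone logStep := fun m n h => by
  have := Nat.log_mono_right (b := 2) (Nat.succ_le_succ h)
  simp only [logStep, Nat.succ_eq_add_one] at *
  omega

lemma le_logStep (n : ℕ) : 100 ≤ logStep n := Nat.le_add_right _ _

lemma logStep_le (n : ℕ) : logStep n ≤ 100 + 4 * n := by
  have := Nat.log_lt_self 2 (x := n + 1) (by omega)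
  simp only [logStep]
  omega

lemma logGrid_zero : logGrid 0 = 0 := rfl

lemma logGrid_succ (n : ℕ) : logGrid (n + 1) = logGrid n + logStep n := Finset.sum_range_succ _ _

lemma logGrid_mono : Monotone logGrid :=
  monotone_nat_of_le_succ fun n => by rw [logGrid_succ]; omega

lemma logGrid_le (n : ℕ) : logGrid n ≤ n * logStep n := by
  calc logGrid n ≤ ∑ _i ∈ Finset.range n, logStep n :=
        Finset.sum_le_sum fun i hi => logStep_mono (Finset.mem_range.1 hi).le
    _ = _ := by simp

lemma three_mul_le_logGrid (n : ℕ) : 3 * n ≤ logGrid n := by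
  induction n with
  | zero => simp
  | succ n ih => have := le_logStep n; rw [logGrid_succ]; omega

lemma gridSize_two_pow (n : ℕ) : gridSize (fun i => 2 ^ logStep i) n = 2 ^ logGrid n :=
  Finset.prod_pow_eq_pow_sum _ _ _

lemma logStep_mul_logGrid_le (n : ℕ) : logStep n * logGrid n ≤ 2 ^ logStep n := by
  set L := Nat.log 2 (n + 1) with hL
  have h1 : n + 1 < 2 ^ (L + 1) := Nat.lt_pow_succ_log_self (by norm_num) _
  have h2 : logStep n ≤ 2 ^ (L + 7) := by
    have h3 : L + 1 ≤ 2 ^ L := Nat.lt_two_pow_self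
    rw [pow_add]
    simp only [logStep, ← hL]
    omega
  calc logStep n * logGrid n ≤ logStep n * (n * logStep n) := Nat.mul_le_mul_left _ (logGrid_le n)
    _ ≤ 2 ^ (L + 7) * (2 ^ (L + 1) * 2 ^ (L + 7)) := by gcongr; omega
    _ = 2 ^ (3 * L + 15) := by rw [← pow_add, ← pow_add]; congr 1; ring
    _ ≤ 2 ^ logStep n := Nat.pow_le_pow_right (by norm_num) (by simp only [logStep, ← hL]; omega)

lemma mul_le_logGrid_add (K n : ℕ) : K * n ≤ logGrid n + K * 2 ^ K := by
  induction n with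
  | zero => simp
  | succ n ih =>
    rw [logGrid_succ]
    rcases lt_or_ge n (2 ^ K) with h | h
    · calc K * (n + 1) ≤ K * 2 ^ K := Nat.mul_le_mul_left _ h
        _ ≤ _ := Nat.le_add_left _ _
    · have h1 : K ≤ Nat.log 2 (n + 1) := Nat.le_log_of_pow_le (by norm_num) (by omega)
      have h2 : K ≤ logStep n := by simp only [logStep]; omega
      rw [mul_add]
      omega

lemma exists_growth_bound {s : ℝ} (hs1 : s < 1) : ∃ C : ℝ, 0 < C ∧ ∀ n,
    ((∏ i ∈ Finset.range (n + 1), 2 ^ logStep i : ℕ) : ℝ) ^ s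
      ≤ C * (∏ i ∈ Finset.range n, 2 ^ logStep i / 8 : ℕ) := by
  obtain ⟨K, hK⟩ := exists_nat_ge (7 / (1 - s))
  rw [div_le_iff₀ (by linarith)] at hK
  refine ⟨(2 : ℝ) ^ (100 + (1 - s) * (K * 2 ^ K)), by positivity, fun n => ?_⟩
  have h8 : ∏ i ∈ Finset.range n, 2 ^ logStep i / 8 = 2 ^ (logGrid n - 3 * n) := by
    have h1 : ∀ i, 2 ^ logStep i / 8 = 2 ^ (logStep i - 3) := fun i => by
      have := le_logStep i
      rw [show (8 : ℕ) = 2 ^ 3 by norm_num, Nat.pow_div (by omega) (by norm_num)]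
    rw [Finset.prod_congr rfl fun i _ => h1 i, Finset.prod_pow_eq_pow_sum]
    congr 1
    induction n with
    | zero => simp [logGrid_zero]
    | succ n ih =>
      have h3 := three_mul_le_logGrid n
      have := le_logStep n
      rw [Finset.sum_range_succ, ih, logGrid_succ]
      omega
  have h3 := three_mul_le_logGrid n
  have hgrid := gridSize_two_pow (n + 1)
  simp only [gridSize] at hgrid
  rw [h8, hgrid]
  push_cast
  rw [← Real.rpow_natCast 2 (logGrid (n + 1)), ← Real.rpow_mul (by norm_num),
    ← Real.rpow_natCast 2 (logGrid n - 3 * n), ← Real.rpow_add (by norm_num)]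
  apply Real.rpow_le_rpow_of_exponent_le (by norm_num)
  rw [logGrid_succ]
  push_cast [h3]
  have h4 : (K : ℝ) * n ≤ logGrid n + K * 2 ^ K := by exact_mod_cast mul_le_logGrid_add K n
  have h5 : (logStep n : ℝ) ≤ 100 + 4 * n := by exact_mod_cast logStep_le n
  have h6 : (1 - s) * (K * n) ≤ (1 - s) * (logGrid n + K * 2 ^ K) :=
    mul_le_mul_of_nonneg_left h4 (by linarith)
  have h7 : 7 * (n : ℝ) ≤ K * (1 - s) * n := mul_le_mul_of_nonneg_right hK (Nat.cast_nonneg n)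
  have h9 : s * (logStep n : ℝ) ≤ logStep n := mul_le_of_le_one_left (Nat.cast_nonneg _) hs1.le
  nlinarith

end Parameters

section FibreTree

variable {θ c : ℝ}

/-- The binary class of the height of a denominator. -/
noncomputable def heightClass (θ c : ℝ) (x : ℕ) : ℕ := Nat.log 2 ⌊height θ c x⌋₊

/-- The fractions whose neighbourhoods are removed at step `n`. -/
def RemovedAt (θ c : ℝ) (n : ℕ) (P : ℤ × ℕ) : Prop :=
  0 < P.2 ∧ ∃ k, n = k + 1 ∧ logGrid k ≤ heightClass θ c P.2 + 18 ∧
    heightClass θ c P.2 + 18 < logGrid (k + 1)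

/-- The radius of the neighbourhoods which are removed. -/
noncomputable def removedRadius (θ c : ℝ) (n : ℕ) (P : ℤ × ℕ) : ℝ :=
  1 / (2 ^ (18 + heightClass θ c P.2) * (logStep n * logGrid n : ℕ))

/-- The tree of the fibre over `θ`. -/
abbrev fibreBad (θ c : ℝ) : ℕ → Set ℕ :=
  removed (fun i => 2 ^ logStep i) (RemovedAt θ c) (fun P => (P.1 : ℝ) / P.2) (removedRadius θ c)

lemma one_le_height (hc : 0 < c) (hbad : ∀ q : ℕ, 0 < q → c ≤ (q : ℝ) * nint (q * θ)) {x : ℕ}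
    (hx : 0 < x) : 1 ≤ height θ c x :=
  le_trans (by exact_mod_cast hx) (le_height hc hbad hx)

lemma two_pow_heightClass_le (hc : 0 < c) (hbad : ∀ q : ℕ, 0 < q → c ≤ (q : ℝ) * nint (q * θ))
    {x : ℕ} (hx : 0 < x) : (2 : ℝ) ^ heightClass θ c x ≤ height θ c x := by
  have h1 := one_le_height hc hbad hx
  have h2 : ⌊height θ c x⌋₊ ≠ 0 := (Nat.floor_pos.2 h1).ne'
  have h3 := Nat.floor_le (a := height θ c x) (by linarith)
  have h4 : ((2 ^ heightClass θ c x : ℕ) : ℝ) ≤ ⌊height θ c x⌋₊ := by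
    exact_mod_cast Nat.pow_log_le_self 2 h2
  push_cast at h4
  linarith

lemma height_lt (x : ℕ) : height θ c x < 2 * 2 ^ heightClass θ c x := by
  have h1 := Nat.lt_floor_add_one (height θ c x)
  have h2 : ((⌊height θ c x⌋₊ + 1 : ℕ) : ℝ) ≤ ((2 ^ (heightClass θ c x + 1) : ℕ) : ℝ) := by
    exact_mod_cast Nat.lt_pow_succ_log_self (b := 2) (by norm_num) ⌊height θ c x⌋₊
  push_cast at h2
  rw [pow_succ'] at h2
  linarith

lemma log_le_heightClass (hc : 0 < c) (hbad : ∀ q : ℕ, 0 < q → c ≤ (q : ℝ) * nint (q * θ))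
    {x : ℕ} (hx : 0 < x) : Nat.log 2 x ≤ heightClass θ c x :=
  Nat.log_mono_right (Nat.le_floor (le_height hc hbad hx))

lemma two_le_logStep_mul_logGrid {n : ℕ} (hn : 0 < n) : 2 ≤ logStep n * logGrid n := by
  have h1 := le_logStep n
  have h2 := three_mul_le_logGrid n
  nlinarith

lemma one_le_removedRadius_mul {n : ℕ} {P : ℤ × ℕ} (h : RemovedAt θ c n P) :
    1 ≤ removedRadius θ c n P * gridSize (fun i => 2 ^ logStep i) (n + 1) := by
  obtain ⟨-, k, rfl, -, h2⟩ := h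
  have hb : 2 ≤ logStep (k + 1) * logGrid (k + 1) := two_le_logStep_mul_logGrid (Nat.succ_pos k)
  have hb' : (0 : ℝ) < (logStep (k + 1) * logGrid (k + 1) : ℕ) := by exact_mod_cast (by omega)
  rw [gridSize_two_pow, removedRadius, logGrid_succ (k + 1), one_div_mul_eq_div,
    one_le_div (by positivity)]
  have h3 := logStep_mul_logGrid_le (k + 1)
  have h4 : 2 ^ (18 + heightClass θ c P.2) ≤ 2 ^ logGrid (k + 1) :=
    Nat.pow_le_pow_right (by norm_num) (by omega)
  exact_mod_cast (by
    rw [pow_add 2 (logGrid (k + 1))]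
    exact Nat.mul_le_mul h4 h3 :
      2 ^ (18 + heightClass θ c P.2) * (logStep (k + 1) * logGrid (k + 1))
        ≤ 2 ^ (logGrid (k + 1) + logStep (k + 1)))

lemma exists_logGrid_le_lt {a m : ℕ} (h : a < logGrid m) :
    ∃ k < m, logGrid k ≤ a ∧ a < logGrid (k + 1) := by
  induction m with
  | zero => simp [logGrid_zero] at h
  | succ m ih =>
    rcases lt_or_ge a (logGrid m) with h1 | h1
    · obtain ⟨k, hk, h2⟩ := ih h1
      exact ⟨k, by omega, h2⟩
    · exact ⟨m, by omega, h1, h⟩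

/-- A point of an alive interval is far from the fractions of small height. -/
lemma not_exists_small_height (hc : 0 < c)
    (hbad : ∀ q : ℕ, 0 < q → c ≤ (q : ℝ) * nint (q * θ)) {m a : ℕ} {β : ℝ}
    (ha : Alive (fun i => 2 ^ logStep i) (fibreBad θ c) (m + 1) a)
    (h1 : (a : ℝ) / gridSize (fun i => 2 ^ logStep i) (m + 1) ≤ β)
    (h2 : β ≤ ((a : ℝ) + 1) / gridSize (fun i => 2 ^ logStep i) (m + 1)) {d : ℕ} (p : ℤ)
    (hd : 0 < d) (hdm : heightClass θ c d + 18 < logGrid m) :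
    1 ≤ 2 ^ (18 + logStep (m + 1)) * (d * nint (d * θ) / c * |d * β - p|) := by
  obtain ⟨k, hk, hk1, hk2⟩ := exists_logGrid_le_lt hdm
  have hR0 : ∀ n, 0 < (fun i => 2 ^ logStep i) n := fun n => by positivity
  have h3 := lt_abs_sub_of_alive hR0 (I := RemovedAt θ c) (cen := fun P : ℤ × ℕ => (P.1 : ℝ) / P.2)
    (rad := removedRadius θ c) (n := k + 1) (i := (p, d)) ⟨hd, k, rfl, hk1, hk2⟩
    (by omega) ha h1 h2
  have hd' : (0 : ℝ) < d := by exact_mod_cast hd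
  have hb : 2 ≤ logStep (k + 1) * logGrid (k + 1) := two_le_logStep_mul_logGrid (Nat.succ_pos k)
  have hb' : (0 : ℝ) < (logStep (k + 1) * logGrid (k + 1) : ℕ) := by exact_mod_cast (by omega)
  have hb2 : ((logStep (k + 1) * logGrid (k + 1) : ℕ) : ℝ) ≤ 2 ^ logStep (m + 1) := by
    have := (logStep_mul_logGrid_le (k + 1)).trans
      (Nat.pow_le_pow_right (by norm_num) (logStep_mono (by omega : k + 1 ≤ m + 1)))
    exact_mod_cast this
  have h4 := two_pow_heightClass_le hc hbad hd
  have h0 := one_le_height hc hbad hd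
  have h0' : 0 ≤ height θ c d := by linarith
  simp only [removedRadius] at h3
  rw [div_lt_iff₀ (by positivity)] at h3
  have h5 : |d * β - p| = d * |β - p / d| := by
    rw [← abs_of_pos hd', ← abs_mul, abs_of_pos hd', mul_sub, mul_div_cancel₀ _ hd'.ne']
  have h6 : d * nint (d * θ) / c * |d * β - p| = height θ c d * |β - p / d| := by
    rw [h5, height]; ring
  rw [h6]
  calc (1 : ℝ) ≤ |β - p / d| * (2 ^ (18 + heightClass θ c d) *
        ((logStep (k + 1) * logGrid (k + 1) : ℕ) : ℝ)) := h3.le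
    _ ≤ |β - p / d| * (2 ^ 18 * height θ c d * 2 ^ logStep (m + 1)) := by
        rw [pow_add]; gcongr
    _ = _ := by rw [pow_add]; ring

/-- The number of removed fractions of given size and height near an alive interval. -/
lemma card_bucket_le (hc : 0 < c) (hc2 : c ≤ 1 / 2)
    (hbad : ∀ q : ℕ, 0 < q → c ≤ (q : ℝ) * nint (q * θ)) {n a i j : ℕ}
    (ha : Alive (fun i => 2 ^ logStep i) (fibreBad θ c) (n - 4) a) {G : Finset (ℤ × ℕ)}
    (hG : ∀ P ∈ G, RemovedAt θ c n P ∧ Meets (gridSize (fun i => 2 ^ logStep i) (n - 4)) a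
      (P.1 / P.2) (removedRadius θ c n P) ∧ Nat.log 2 P.2 = i ∧ heightClass θ c P.2 = j) :
    (G.card : ℝ) * 2 ^ logGrid (n - 4) ≤ 648 * 2 ^ j := by
  rcases G.eq_empty_or_nonempty with rfl | ⟨P₀, hP₀⟩
  · simp
  set m := n - 4 with hm
  obtain ⟨⟨hx0, k, rfl, hk1, hk2⟩, -, hi0, hj0⟩ := hG P₀ hP₀
  have hij : i ≤ j := by rw [← hi0, ← hj0]; exact log_le_heightClass hc hbad hx0
  have hmk : m ≤ k := by omega
  rw [hj0] at hk1 hk2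
  set ℓ : ℝ := 1 / 2 ^ logGrid m with hℓ
  have hℓ0 : 0 < ℓ := by positivity
  have hgoal : (G.card : ℝ) ≤ 648 * (2 ^ j * ℓ) → (G.card : ℝ) * 2 ^ logGrid m ≤ 648 * 2 ^ j := by
    intro h
    rw [hℓ, ← mul_assoc, mul_one_div, le_div_iff₀ (by positivity)] at h
    exact h
  apply hgoal
  set β : ℝ := (a + 1 / 2) * ℓ with hβ
  have hbox : ∀ P ∈ G, (2 : ℝ) ^ i ≤ P.2 ∧ (P.2 : ℝ) < 2 * 2 ^ i ∧ 2 ^ j ≤ height θ c P.2 ∧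
      height θ c P.2 < 2 * 2 ^ j ∧ |P.2 * β - P.1| ≤ 2 * 2 ^ i * ℓ := by
    intro P hP
    obtain ⟨⟨hx, -⟩, ⟨h1, h2⟩, hi, hj⟩ := hG P hP
    have hx' : (0 : ℝ) < P.2 := by exact_mod_cast hx
    have hxi : (P.2 : ℝ) < 2 * 2 ^ i := by
      rw [← hi, ← pow_succ']
      exact_mod_cast Nat.lt_pow_succ_log_self (by norm_num) P.2
    refine ⟨?_, hxi, ?_, ?_, ?_⟩
    · rw [← hi]
      exact_mod_cast Nat.pow_log_le_self 2 hx.ne'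
    · rw [← hj]; exact two_pow_heightClass_le hc hbad hx
    · rw [← hj]; exact height_lt _
    · have hr : removedRadius θ c (k + 1) P ≤ ℓ / 2 := by
        rw [removedRadius, hj, hℓ, div_div]
        have hb : 2 ≤ logStep (k + 1) * logGrid (k + 1) := two_le_logStep_mul_logGrid (Nat.succ_pos k)
        have h3 : 2 ^ logGrid m ≤ 2 ^ (18 + j) :=
          Nat.pow_le_pow_right (by norm_num) (by have := logGrid_mono hmk; omega)
        have h4 : ((2 ^ logGrid m * 2 : ℕ) : ℝ)
            ≤ (2 ^ (18 + j) * (logStep (k + 1) * logGrid (k + 1)) : ℕ) := by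
          exact_mod_cast Nat.mul_le_mul h3 hb
        push_cast at h4 ⊢
        apply one_div_le_one_div_of_le (by positivity) h4
      rw [gridSize_two_pow] at h1 h2
      push_cast at h1 h2
      rw [div_eq_mul_one_div, ← hℓ] at h2
      rw [div_eq_mul_one_div (_ + _), ← hℓ] at h1
      have h3 : |β - P.1 / P.2| ≤ ℓ := by
        rw [abs_le, hβ]
        constructor <;> linarith
      have h5 : |P.2 * β - P.1| = P.2 * |β - P.1 / P.2| := by
        rw [← abs_of_pos hx', ← abs_mul, abs_of_pos hx', mul_sub, mul_div_cancel₀ _ hx'.ne']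
      rw [h5]
      gcongr
  have hXA : (2 : ℝ) ^ i ≤ 2 ^ j := pow_le_pow_right₀ (by norm_num) hij
  rcases le_or_gt 1 ((2 : ℝ) ^ i * ℓ) with hlong | hshort
  · have h := card_le_of_one_le hc hbad (X := 2 ^ i) (A := 2 ^ j) (ℓ := ℓ) (β := β) (by positivity)
      hXA hlong (G := G) fun P hP => by
        obtain ⟨h1, h2, -, h4, h5⟩ := hbox P hP
        exact ⟨h1, h2, h4, h5⟩
    have : (0 : ℝ) < 2 ^ j * ℓ := by positivity
    linarith
  rcases hm0 : m with _ | m'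
  · rw [hℓ, hm0, logGrid_zero, pow_zero, div_one, mul_one] at hshort
    exact absurd hshort (not_lt.2 (one_le_pow₀ (by norm_num)))
  rw [hm0] at ha hℓ
  have hkm : k = m' + 4 := by omega
  rw [hkm, show m' + 4 = m' + 1 + 1 + 1 + 1 by ring, logGrid_succ (m' + 1 + 1 + 1),
    logGrid_succ (m' + 1 + 1), logGrid_succ (m' + 1)] at hk1
  have he0 := le_logStep (m' + 1)
  have he1 : logStep (m' + 1) ≤ logStep (m' + 1 + 1) := logStep_mono (by omega)
  have he2 : logStep (m' + 1) ≤ logStep (m' + 1 + 1 + 1) := logStep_mono (by omega)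
  have he3 : logStep m' ≤ logStep (m' + 1) := logStep_mono (by omega)
  set t := (j - logGrid (m' + 1)) / 2 with ht
  have ht1 : logStep (m' + 1) + 25 ≤ t := by omega
  have hAℓ : (2 : ℝ) ^ j * ℓ = 2 ^ (j - logGrid (m' + 1)) := by
    rw [hℓ, mul_one_div, pow_sub₀ _ (by norm_num) (by omega), div_eq_mul_inv]
  have hV2 : (2 : ℝ) ^ j * ℓ ≤ 2 * (2 ^ t) ^ 2 := by
    rw [hAℓ, ← pow_mul, ← pow_succ']
    exact pow_le_pow_right₀ (by norm_num) (by omega)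
  rcases card_le_or_exists hc hc2 (X := 2 ^ i) (A := 2 ^ j) (ℓ := ℓ) (β := β) (by positivity)
      (by positivity) hℓ0 hshort (G := G) hbox (T := 2 ^ t)
      (by
        calc 9 ≤ 2 ^ 24 := by norm_num
          _ ≤ 2 ^ t := Nat.pow_le_pow_right (by norm_num) (by omega))
      (by
        push_cast
        rw [hAℓ, ← pow_mul]
        exact pow_le_pow_right₀ (by norm_num) (by omega)) with h | ⟨d, p, hd, hH, hprod⟩
  · exact h
  exfalso
  push_cast at hH hprod
  have hT0 : (0 : ℝ) < 2 ^ t := by positivity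
  have hcls : heightClass θ c d + 18 < logGrid m' := by
    have h1 := two_pow_heightClass_le hc hbad hd
    have h2 : (2 : ℝ) ^ heightClass θ c d * 2 ^ t ≤ 2 ^ (5 + logGrid (m' + 1)) := by
      have h3 : (2 : ℝ) ^ j ≤ 2 * (2 ^ t) ^ 2 * 2 ^ logGrid (m' + 1) := by
        calc (2 : ℝ) ^ j = 2 ^ j * ℓ * 2 ^ logGrid (m' + 1) := by rw [hℓ]; field_simp
          _ ≤ _ := by gcongr
      have h4 : (2 : ℝ) ^ heightClass θ c d * 2 ^ t ≤ 16 * 2 ^ j / (2 ^ t) ^ 3 * 2 ^ t := by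
        gcongr; exact h1.trans hH
      refine h4.trans ?_
      rw [show 16 * (2 : ℝ) ^ j / (2 ^ t) ^ 3 * 2 ^ t = 16 * 2 ^ j / (2 ^ t) ^ 2 by field_simp,
        div_le_iff₀ (by positivity), pow_add]
      linarith
    rw [← pow_add, pow_le_pow_iff_right₀ (by norm_num), logGrid_succ] at h2
    omega
  have hβmem : (a : ℝ) / gridSize (fun i => 2 ^ logStep i) (m' + 1) ≤ β ∧
      β ≤ ((a : ℝ) + 1) / gridSize (fun i => 2 ^ logStep i) (m' + 1) := by
    rw [gridSize_two_pow]
    push_cast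
    rw [div_eq_mul_one_div, div_eq_mul_one_div (_ + _), ← hℓ, hβ]
    exact ⟨mul_le_mul_of_nonneg_right (by linarith) hℓ0.le,
      mul_le_mul_of_nonneg_right (by linarith) hℓ0.le⟩
  have hfar := not_exists_small_height hc hbad ha hβmem.1 hβmem.2 p hd hcls
  have h1 : (1 : ℝ) ≤ 2 ^ (18 + logStep (m' + 1)) * (64 / 2 ^ t) := by
    refine hfar.trans ?_
    gcongr
    refine hprod.trans ?_
    rw [div_le_div_iff₀ (by positivity) hT0]
    calc 32 * ((2 : ℝ) ^ j * ℓ) * 2 ^ t ≤ 32 * (2 * (2 ^ t) ^ 2) * 2 ^ t := by gcongr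
      _ = _ := by ring
  rw [← mul_div_assoc, le_div_iff₀ hT0, one_mul, show (64 : ℝ) = 2 ^ 6 by norm_num, ← pow_add,
    pow_le_pow_iff_right₀ (by norm_num)] at h1
  omega

end FibreTree

section Fibre

variable {θ c : ℝ}

lemma sparseBad_fibre (hc : 0 < c) (hc2 : c ≤ 1 / 2)
    (hbad : ∀ q : ℕ, 0 < q → c ≤ (q : ℝ) * nint (q * θ)) :
    SparseBad (fun i => 2 ^ logStep i) (fibreBad θ c) := by
  classical
  refine sparseBad_removed (fun n => by positivity) (fun n P h => one_le_removedRadius_mul h)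
    fun n => ⟨n - 4, Nat.sub_le _ _, fun a ha F hF => ?_⟩
  rcases F.eq_empty_or_nonempty with rfl | ⟨P₀, hP₀⟩
  · simp
  obtain ⟨⟨-, k, rfl, -⟩, -⟩ := hF P₀ hP₀
  set b := logStep (k + 1) * logGrid (k + 1) with hb
  have hb0 : 2 ≤ b := two_le_logStep_mul_logGrid (Nat.succ_pos k)
  have hb0' : (0 : ℝ) < b := by exact_mod_cast (by omega)
  have hmaps : ∀ P ∈ F, (Nat.log 2 P.2, heightClass θ c P.2 + 18) ∈
      Finset.range (logGrid (k + 1)) ×ˢ Finset.Ico (logGrid k) (logGrid (k + 1)) := by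
    intro P hP
    obtain ⟨⟨hx, k', hk', h1, h2⟩, -⟩ := hF P hP
    obtain rfl : k = k' := by omega
    have h3 := log_le_heightClass hc hbad hx
    rw [Finset.mem_product, Finset.mem_range, Finset.mem_Ico]
    exact ⟨by simp only; omega, h1, h2⟩
  have hsum : ∑ P ∈ F, removedRadius θ c (k + 1) P * gridSize (fun i => 2 ^ logStep i) (k + 1 - 4)
      ≤ 648 / 2 ^ 18 := by
    rw [← Finset.sum_fiberwise_of_maps_to hmaps]
    calc _ ≤ (Finset.range (logGrid (k + 1)) ×ˢ
          Finset.Ico (logGrid k) (logGrid (k + 1))).card • (648 / (2 ^ 18 * b) : ℝ) := by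
          refine Finset.sum_le_card_nsmul _ _ _ fun ij hij => ?_
          obtain ⟨i, j'⟩ := ij
          rcases (F.filter fun P => (Nat.log 2 P.2, heightClass θ c P.2 + 18) = (i, j')).eq_empty_or_nonempty
            with he | ⟨P₁, hP₁⟩
          · rw [he, Finset.sum_empty]; positivity
          obtain ⟨j, rfl⟩ : ∃ j, j' = j + 18 := by
            rw [Finset.mem_filter, Prod.mk.injEq] at hP₁
            exact ⟨_, hP₁.2.2.symm⟩
          have hbucket := card_bucket_le hc hc2 hbad (n := k + 1) (i := i) (j := j) ha
            (G := F.filter fun P => (Nat.log 2 P.2, heightClass θ c P.2 + 18) = (i, j + 18)) (by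
              intro P hP
              rw [Finset.mem_filter, Prod.mk.injEq] at hP
              exact ⟨(hF P hP.1).1, (hF P hP.1).2, hP.2.1, by omega⟩)
          rw [Finset.sum_congr rfl (g := fun _ => 1 / (2 ^ (18 + j) * (b : ℝ)) *
            2 ^ logGrid (k + 1 - 4)) (by
              intro P hP
              rw [Finset.mem_filter, Prod.mk.injEq] at hP
              have hj : heightClass θ c P.2 = j := by omega
              rw [removedRadius, hj, gridSize_two_pow, Nat.cast_pow, Nat.cast_ofNat])]
          rw [Finset.sum_const, nsmul_eq_mul]
          calc _ = (_ * 2 ^ logGrid (k + 1 - 4)) * (1 / (2 ^ (18 + j) * (b : ℝ))) := by ring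
            _ ≤ 648 * 2 ^ j * (1 / (2 ^ (18 + j) * (b : ℝ))) := by gcongr
            _ = _ := by rw [pow_add]; field_simp
      _ = (logGrid (k + 1) * logStep k : ℕ) * (648 / (2 ^ 18 * b) : ℝ) := by
          rw [Finset.card_product, Finset.card_range, Nat.card_Ico, nsmul_eq_mul,
            show logGrid (k + 1) - logGrid k = logStep k by rw [logGrid_succ]; omega]
      _ ≤ b * (648 / (2 ^ 18 * b) : ℝ) := by
          gcongr
          rw [hb, mul_comm]
          exact Nat.mul_le_mul_right _ (logStep_mono (Nat.le_succ k))
      _ = _ := by field_simp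
  have hpow : (2 : ℝ) ^ (k + 1 - (k + 1 - 4)) ≤ 2 ^ 4 := pow_le_pow_right₀ (by norm_num) (by omega)
  have hsum0 : 0 ≤ ∑ P ∈ F, removedRadius θ c (k + 1) P *
      gridSize (fun i => 2 ^ logStep i) (k + 1 - 4) :=
    Finset.sum_nonneg fun P _ => by unfold removedRadius; positivity
  calc 16 * 2 ^ (k + 1 - (k + 1 - 4)) * ∑ P ∈ F, removedRadius θ c (k + 1) P *
        gridSize (fun i => 2 ^ logStep i) (k + 1 - 4) ≤ 16 * 2 ^ 4 * (648 / 2 ^ 18) := by gcongr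
    _ ≤ 1 := by norm_num

lemma one_lt_log_three : 1 < Real.log 3 := by
  rw [Real.lt_log_iff_exp_lt (by norm_num)]
  exact Real.exp_one_lt_d9.trans (by norm_num)

lemma natLog_two_le (n : ℕ) : (Nat.log 2 n : ℝ) ≤ 2 * Real.log n := by
  have h1 : (Nat.log 2 n : ℝ) ≤ Real.logb 2 n := by exact_mod_cast Real.natLog_le_logb n 2
  have h2 : (1 / 2 : ℝ) < Real.log 2 := by have := Real.log_two_gt_d9; linarith
  refine h1.trans ?_
  rw [Real.logb, div_le_iff₀ (by linarith)]
  have := Real.log_natCast_nonneg n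
  nlinarith

lemma logStep_mul_logGrid_succ_le {j k : ℕ} (h : logGrid k ≤ j + 18) :
    logStep (k + 1) * logGrid (k + 1) ≤ (100 + 4 * Nat.log 2 (j + 38)) * (5 * (j + 38)) := by
  have h1 := three_mul_le_logGrid k
  have h2 := logStep_le k
  rw [logGrid_succ]
  refine Nat.mul_le_mul ?_ (by omega)
  simp only [logStep]
  have := Nat.log_mono_right (b := 2) (by omega : k + 1 + 1 ≤ j + 38)
  omega

/-- The radii of the removed neighbourhoods are bounded below by a product of logarithms. -/
lemma exists_log_bound (hc : 0 < c) (hc2 : c ≤ 1 / 2) : ∃ C : ℝ, 0 < C ∧ ∀ x j k : ℕ, 3 ≤ x →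
    (2 : ℝ) ^ j ≤ (x : ℝ) ^ 2 / (2 * c) → logGrid k ≤ j + 18 →
    ((logStep (k + 1) * logGrid (k + 1) : ℕ) : ℝ) ≤ C * (Real.log x * Real.log (Real.log x)) := by
  have hl3 := one_lt_log_three
  set δ := Real.log (Real.log 3) with hδ
  have hδ0 : 0 < δ := Real.log_pos hl3
  set L := Real.log (1 / (2 * c)) with hL
  have hL0 : 0 ≤ L := Real.log_nonneg (by rw [one_le_div (by positivity)]; linarith)
  set M := 42 + 2 * L with hM
  have hM0 : 0 < M := by positivity
  have hlM : 0 ≤ Real.log M := Real.log_nonneg (by linarith)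
  refine ⟨5 * M * (100 / δ + 8 * (Real.log M / δ) + 8), by positivity, fun x j k hx hj hk => ?_⟩
  have hx0 : (0 : ℝ) < x := by exact_mod_cast (by omega)
  have hlx : Real.log 3 ≤ Real.log x := Real.log_le_log (by norm_num) (by exact_mod_cast hx)
  have hllx : δ ≤ Real.log (Real.log x) := Real.log_le_log (by linarith) hlx
  have hj1 : (j : ℝ) + 38 ≤ M * Real.log x := by
    have h1 := Real.log_le_log (by positivity) hj
    rw [Real.log_pow, div_eq_mul_one_div, Real.log_mul (by positivity) (by positivity),
      Real.log_pow, ← hL] at h1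
    have h2 : (1 / 2 : ℝ) < Real.log 2 := by have := Real.log_two_gt_d9; linarith
    have h3 : (j : ℝ) * (1 / 2) ≤ j * Real.log 2 := by gcongr
    have h4 : L ≤ L * Real.log x := le_mul_of_one_le_right hL0 (by linarith)
    push_cast at h1
    rw [hM]
    nlinarith
  have hj2 : Real.log ((j : ℝ) + 38) ≤ Real.log M + Real.log (Real.log x) := by
    rw [← Real.log_mul hM0.ne' (by linarith)]
    exact Real.log_le_log (by positivity) hj1
  have h5 := natLog_two_le (j + 38)
  have h6 : ∀ y : ℝ, 0 ≤ y → y ≤ y / δ * Real.log (Real.log x) := fun y hy => by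
    calc y = y / δ * δ := by field_simp
      _ ≤ _ := by gcongr
  have h7 : (100 : ℝ) + 4 * Nat.log 2 (j + 38)
      ≤ (100 / δ + 8 * (Real.log M / δ) + 8) * Real.log (Real.log x) := by
    have := h6 100 (by norm_num)
    have := h6 _ hlM
    push_cast at h5
    nlinarith
  calc ((logStep (k + 1) * logGrid (k + 1) : ℕ) : ℝ)
      ≤ ((100 + 4 * Nat.log 2 (j + 38)) * (5 * (j + 38)) : ℕ) := by
        exact_mod_cast logStep_mul_logGrid_succ_le hk
    _ = (100 + 4 * Nat.log 2 (j + 38)) * (5 * ((j : ℝ) + 38)) := by push_cast; ring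
    _ ≤ (100 / δ + 8 * (Real.log M / δ) + 8) * Real.log (Real.log x) * (5 * (M * Real.log x)) := by
        gcongr
        have : 0 < Real.log (Real.log x) := by linarith
        positivity
    _ = _ := by ring

theorem isSpread_fibre {s : ℝ} (hs : 0 < s) (hs1 : s < 1)
    (hθ : ∃ c : ℝ, 0 < c ∧ ∀ q : ℕ, 0 < q → c ≤ (q : ℝ) * nint (q * θ)) :
    IsSpread s {θ₂ : ℝ | ∃ c : ℝ, 0 < c ∧ ∀ x : ℤ, 3 ≤ x →
      c ≤ (x : ℝ) * Real.log x * Real.log (Real.log x) * nint (θ * x) * nint (θ₂ * x)} := by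
  obtain ⟨c, hc, hbad⟩ := hθ
  have hc2 : c ≤ 1 / 2 := by
    have h1 := hbad 1 one_pos
    have h2 := nint_le_half ((1 : ℕ) * θ)
    push_cast at h1 h2
    linarith
  obtain ⟨C, hC, hgrow⟩ := exists_growth_bound hs1
  refine isSpread_of_sparseBad (fun n => ?_) (sparseBad_fibre hc hc2 hbad) hs hC hgrow fun z hz => ?_
  · calc 16 ≤ 2 ^ 100 := by norm_num
      _ ≤ 2 ^ logStep n := Nat.pow_le_pow_right (by norm_num) (le_logStep n)
  obtain ⟨D, hD, hlog⟩ := exists_log_bound hc hc2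
  refine ⟨c / (2 ^ 18 * D), by positivity, fun x hx => ?_⟩
  lift x to ℕ using by omega
  have hx3 : 3 ≤ x := by omega
  have hx0 : 0 < x := by omega
  have hx0' : (0 : ℝ) < x := by exact_mod_cast hx0
  rw [Int.cast_natCast, mul_comm θ, mul_comm z]
  set j := heightClass θ c x with hj
  obtain ⟨k, -, hk1, hk2⟩ := exists_logGrid_le_lt (a := j + 18) (m := j + 19)
    (by have := three_mul_le_logGrid (j + 19); omega)
  obtain ⟨a, ha, h1, h2⟩ := hz (k + 2)
  have hfar := lt_abs_sub_of_alive (fun n => by positivity) (I := RemovedAt θ c)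
    (cen := fun P : ℤ × ℕ => (P.1 : ℝ) / P.2) (rad := removedRadius θ c) (n := k + 1)
    (i := (round (x * z), x)) ⟨hx0, k, rfl, hk1, hk2⟩ (by omega) ha h1 h2
  simp only [removedRadius, ← hj] at hfar
  have hH := two_pow_heightClass_le hc hbad hx0
  rw [← hj] at hH
  have hb := hlog x j k hx3 (hH.trans (by
    rw [height, div_le_div_iff₀ hc (by positivity)]
    have := mul_le_mul_of_nonneg_left (nint_le_half (x * θ)) (by positivity : (0 : ℝ) ≤ x ^ 2 * (2 * c))
    linarith)) hk1
  set b := logStep (k + 1) * logGrid (k + 1) with hbdef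
  have hb0 : 2 ≤ b := two_le_logStep_mul_logGrid (Nat.succ_pos k)
  have hb0' : (0 : ℝ) < b := by exact_mod_cast (by omega)
  set W := Real.log x * Real.log (Real.log x) with hW
  have hW0 : 0 < W := by
    have : 0 < D * W := hb0'.trans_le hb
    exact (mul_pos_iff_of_pos_left hD).1 this
  rw [nint_eq_abs_sub z hx0']
  calc c / (2 ^ 18 * D) = W * (c * 2 ^ j * (1 / (2 ^ (18 + j) * (D * W)))) := by
        rw [pow_add]; field_simp
    _ ≤ W * (c * height θ c x * |z - round (x * z) / x|) := by
        have h3 : 1 / (2 ^ (18 + j) * (D * W)) ≤ |z - round (x * z) / x| :=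
          le_trans (by gcongr) hfar.le
        have h4 : c * 2 ^ j ≤ c * height θ c x := by gcongr
        have h5 : 0 ≤ c * height θ c x := le_trans (by positivity) h4
        gcongr
    _ = _ := by rw [height, hW]; field_simp

end Fibre

lemma one_le_dimH_fibre {θ : ℝ}
    (hθ : ∃ c : ℝ, 0 < c ∧ ∀ q : ℕ, 0 < q → c ≤ (q : ℝ) * nint (q * θ)) :
    1 ≤ dimH {θ₂ : ℝ | ∃ c : ℝ, 0 < c ∧ ∀ x : ℤ, 3 ≤ x →
      c ≤ (x : ℝ) * Real.log x * Real.log (Real.log x) * nint (θ * x) * nint (θ₂ * x)} := by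
  refine le_of_forall_lt fun r hr => ?_
  obtain ⟨s, hrs, hs1⟩ := ENNReal.lt_iff_exists_nnreal_btwn.1 hr
  have hs0 : 0 < s := by exact_mod_cast (zero_le.trans_lt hrs)
  exact hrs.trans_le ((isSpread_fibre (NNReal.coe_pos.2 hs0) (by exact_mod_cast hs1) hθ).dimH_ge hs0)

/-- Badziahin's theorem on Littlewood-type badly approximable pairs. -/
theorem stmt3 :
    dimH {p : ℝ × ℝ | ∃ c : ℝ, 0 < c ∧ ∀ x : ℤ, 3 ≤ x →
        c ≤ (x : ℝ) * Real.log x * Real.log (Real.log x) * nint (p.1 * x) * nint (p.2 * x)} = 2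
      ∧
    ∀ θ₁ : ℝ, (∃ c : ℝ, 0 < c ∧ ∀ q : ℕ, 0 < q → c ≤ (q : ℝ) * nint (q * θ₁)) →
      dimH {θ₂ : ℝ | ∃ c : ℝ, 0 < c ∧ ∀ x : ℤ, 3 ≤ x →
        c ≤ (x : ℝ) * Real.log x * Real.log (Real.log x) * nint (θ₁ * x) * nint (θ₂ * x)} = 1 := by
  constructor
  · apply le_antisymm
    · refine (dimH_mono (Set.subset_univ _)).trans_eq ?_
      rw [Real.dimH_univ_eq_finrank]
      simp
    · refine le_of_forall_lt fun r hr => ?_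
      have hr' : r / 2 < 1 := ENNReal.div_lt_of_lt_mul' (by simpa using hr)
      obtain ⟨s, hrs, hs1⟩ := ENNReal.lt_iff_exists_nnreal_btwn.1 hr'
      have hs0 : 0 < s := by exact_mod_cast (zero_le.trans_lt hrs)
      calc r = r / 2 + r / 2 := (ENNReal.add_halves r).symm
        _ < s + s := ENNReal.add_lt_add hrs hrs
        _ ≤ _ := dimH_ge_of_slices hs0 hs0
          (isSpread_badlyApproximable (NNReal.coe_pos.2 hs0) (by exact_mod_cast hs1))
          fun θ hθ => hs1.trans_le (one_le_dimH_fibre hθ)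
  · exact fun θ hθ => le_antisymm
      ((dimH_mono (Set.subset_univ _)).trans_eq Real.dimH_univ) (one_le_dimH_fibre hθ)
end

section
/- Let p be a prime. The set of real numbers θ satisfying liminf_{q → ∞, q ∈ ℤ_{>0}} q · (log q) · (log log q) · |q|_p · ‖qθ‖ > 0 has Hausdorff dimension equal to 1. -/
open Filter

/-- Number of dyadic levels between the scale of a rational and the scale of its neighbourhood. -/
def dyadicDelay (n : ℕ) : ℕ := Nat.log 2 n + Nat.log 2 (Nat.log 2 n) + 11

lemma dyadicDelay_mono : Monotone dyadicDelay := by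
  intro a b h
  have h1 : Nat.log 2 a ≤ Nat.log 2 b := Nat.log_mono_right h
  have h2 : Nat.log 2 (Nat.log 2 a) ≤ Nat.log 2 (Nat.log 2 b) := Nat.log_mono_right h1
  unfold dyadicDelay
  omega

lemma dyadicDelay_le (n : ℕ) : dyadicDelay n ≤ 2 * Nat.log 2 n + 11 := by
  have := Nat.log_le_self 2 (Nat.log 2 n)
  unfold dyadicDelay
  omega

lemma two_pow_dyadicDelay_le {n : ℕ} (hn : 2 ≤ n) :
    2 ^ dyadicDelay n ≤ n * Nat.log 2 n * 2048 := by
  have h0 : Nat.log 2 n ≠ 0 := (Nat.log_pos (by norm_num) hn).ne'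
  have h1 : 2 ^ Nat.log 2 n ≤ n := Nat.pow_log_le_self 2 (by omega)
  have h2 : 2 ^ Nat.log 2 (Nat.log 2 n) ≤ Nat.log 2 n := Nat.pow_log_le_self 2 h0
  unfold dyadicDelay
  rw [pow_add, pow_add]
  exact Nat.mul_le_mul (Nat.mul_le_mul h1 h2) (by norm_num)

lemma dyadicDelay_le_self {n : ℕ} (hn : 2048 ≤ n) : dyadicDelay n ≤ n := by
  have hw : 11 ≤ Nat.log 2 n := Nat.le_log_of_pow_le (by norm_num) (by omega)
  have h1 : 2 ^ Nat.log 2 n ≤ n := Nat.pow_log_le_self 2 (by omega)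
  have h2 : ∀ w : ℕ, 11 ≤ w → 3 * w ≤ 2 ^ w := by
    intro w hw
    induction w, hw using Nat.le_induction with
    | base => norm_num
    | succ k _ ih => rw [pow_succ]; omega
  have := h2 _ hw
  have := dyadicDelay_le n
  omega

lemma mul_dyadicDelay_le_two_pow {n : ℕ} (hn : 2048 ≤ n) :
    96 * (n + 1) * dyadicDelay (n + dyadicDelay n) ≤ 2 ^ dyadicDelay n := by
  have hw : 11 ≤ Nat.log 2 n := Nat.le_log_of_pow_le (by norm_num) (by omega)
  have h1 : n + 1 ≤ 2 ^ (Nat.log 2 n + 1) := Nat.lt_pow_succ_log_self (by norm_num) n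
  have h2 : Nat.log 2 n + 1 ≤ 2 ^ (Nat.log 2 (Nat.log 2 n) + 1) :=
    Nat.lt_pow_succ_log_self (by norm_num) _
  have h3 : dyadicDelay (n + dyadicDelay n) ≤ 3 * (Nat.log 2 n + 1) + 2 := by
    have := dyadicDelay_le_self hn
    have h4 := dyadicDelay_mono (show n + dyadicDelay n ≤ n * 2 by omega)
    have h5 := dyadicDelay_le (n * 2)
    rw [Nat.log_mul_base (by norm_num) (by omega)] at h5
    omega
  calc 96 * (n + 1) * dyadicDelay (n + dyadicDelay n)
      ≤ 96 * (n + 1) * (4 * (Nat.log 2 n + 1)) := Nat.mul_le_mul_left _ (by omega)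
    _ = (n + 1) * (Nat.log 2 n + 1) * 384 := by ring
    _ ≤ 2 ^ (Nat.log 2 n + 1) * 2 ^ (Nat.log 2 (Nat.log 2 n) + 1) * 2 ^ 9 :=
        Nat.mul_le_mul (Nat.mul_le_mul h1 h2) (by norm_num)
    _ = 2 ^ dyadicDelay n := by
        unfold dyadicDelay
        rw [← pow_add, ← pow_add]
        congr 1
        ring

lemma two_pow_le_four_mul_pow (L : ℕ) (hL : 0 < L) :
    (2 : ℝ) ^ L ≤ 4 * (2 - 1 / (L : ℝ)) ^ (L - 1) := by
  have hL' : (1 : ℝ) ≤ L := by exact_mod_cast hL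
  have hinv : 1 / (L : ℝ) ≤ 1 := by rw [div_le_one (by linarith)]; exact hL'
  have hB := one_add_mul_le_pow (a := -(1 / (2 * (L : ℝ)))) (by
    have : 1 / (2 * (L : ℝ)) = 1 / L / 2 := by field_simp
    rw [this]; linarith) (L - 1)
  have h1 : (1 : ℝ) / 2 ≤ 1 + ((L - 1 : ℕ) : ℝ) * -(1 / (2 * (L : ℝ))) := by
    rw [Nat.cast_sub hL]
    have : (L : ℝ) * (1 / (2 * L)) = 1 / 2 := by field_simp
    have h0 : 0 ≤ 1 / (2 * (L : ℝ)) := by positivity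
    push_cast
    nlinarith
  have h2 : (2 : ℝ) - 1 / L = 2 * (1 + -(1 / (2 * (L : ℝ)))) := by field_simp; ring
  have h3 : (2 : ℝ) ^ L = 2 * 2 ^ (L - 1) := by
    rw [← pow_succ']
    congr 1
    omega
  rw [h2, mul_pow, h3]
  have h4 : (0 : ℝ) < 2 ^ (L - 1) := by positivity
  nlinarith

/-- If at each level at most `b` and `e` intervals are discarded, with `b` bounded in terms of the
count several levels earlier, then the count nearly doubles at each level. -/
lemma nearly_doubling (N b e : ℕ → ℝ) (n₀ : ℕ) (hn₀ : 2048 ≤ n₀) (hN : 0 < N n₀)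
    (hN0 : ∀ n, 0 ≤ N n)
    (hstep : ∀ m, n₀ ≤ m → 2 * N m ≤ N (m + 1) + b (m + 1) + e (m + 1))
    (hb : ∀ n, n₀ ≤ n → b (n + dyadicDelay n) ≤ 12 * (n + 1) * N n)
    (hb0 : ∀ m, (∀ n, n₀ ≤ n → m ≠ n + dyadicDelay n) → b m ≤ 0)
    (he : ∀ m, n₀ ≤ m → 2 * dyadicDelay (m + 1) * e (m + 1) ≤
      (2 - 1 / (dyadicDelay n₀ : ℝ)) ^ (m - n₀) * N n₀) (m : ℕ) (hm : n₀ ≤ m) : 0 < N m := by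
  have hpos : ∀ j, (1 : ℝ) ≤ dyadicDelay j := fun j ↦ by
    have : 1 ≤ dyadicDelay j := by unfold dyadicDelay; omega
    exact_mod_cast this
  have hlam : ∀ j, (1 : ℝ) ≤ 2 - 1 / (dyadicDelay j : ℝ) := fun j ↦ by
    have : 1 / (dyadicDelay j : ℝ) ≤ 1 := by rw [div_le_one (by linarith [hpos j])]; exact hpos j
    linarith
  have hlam_mono : ∀ i j, i ≤ j →
      2 - 1 / (dyadicDelay i : ℝ) ≤ 2 - 1 / (dyadicDelay j : ℝ) := fun i j hij ↦ by
    have h1 : (dyadicDelay i : ℝ) ≤ dyadicDelay j := by exact_mod_cast dyadicDelay_mono hij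
    have := one_div_le_one_div_of_le (by linarith [hpos i]) h1
    linarith
  suffices H : ∀ m, n₀ ≤ m → ∀ n, n₀ ≤ n → n ≤ m →
      (2 - 1 / (dyadicDelay n : ℝ)) ^ (m - n) * N n ≤ N m ∧ 0 < N m from
    (H m hm m hm le_rfl).2
  intro m hm
  induction m, hm using Nat.le_induction with
  | base =>
    intro n h1 h2
    obtain rfl : n = n₀ := le_antisymm h2 h1
    simp [hN]
  | succ m hm ih =>
    have hNm : 0 < N m := (ih m hm le_rfl).2
    have hD : 0 < (dyadicDelay (m + 1) : ℝ) := by linarith [hpos (m + 1)]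
    have hb' : 2 * dyadicDelay (m + 1) * b (m + 1) ≤ N m := by
      by_cases hex : ∃ n, n₀ ≤ n ∧ m + 1 = n + dyadicDelay n
      · obtain ⟨n, hn, hmn⟩ := hex
        have h1 : 1 ≤ dyadicDelay n := by exact_mod_cast hpos n
        have h2 := (ih n hn (by omega)).1
        have h3 := two_pow_le_four_mul_pow (dyadicDelay n) h1
        have h4 : (96 * (n + 1) * dyadicDelay (n + dyadicDelay n) : ℝ) ≤ 2 ^ dyadicDelay n := by
          exact_mod_cast mul_dyadicDelay_le_two_pow (hn₀.trans hn)
        have h5 := hb n hn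
        rw [← hmn] at h4 h5
        rw [show m - n = dyadicDelay n - 1 by omega] at h2
        have h6 := mul_le_mul_of_nonneg_left h5 hD.le
        have h7 := mul_le_mul_of_nonneg_right (h4.trans h3) (hN0 n)
        linarith
      · push Not at hex
        have := mul_nonneg hD.le (neg_nonneg.2 (hb0 (m + 1) hex))
        linarith
    have he' : 2 * dyadicDelay (m + 1) * e (m + 1) ≤ N m :=
      (he m hm).trans (ih n₀ le_rfl hm).1
    have hgrow : (2 - 1 / (dyadicDelay (m + 1) : ℝ)) * N m ≤ N (m + 1) := by
      have h1 := mul_le_mul_of_nonneg_left (hstep m hm) hD.le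
      have h2 : (dyadicDelay (m + 1) : ℝ) * ((2 - 1 / (dyadicDelay (m + 1) : ℝ)) * N m) =
          2 * dyadicDelay (m + 1) * N m - N m := by field_simp
      refine le_of_mul_le_mul_left ?_ hD
      rw [h2]
      linarith
    have hpos' : 0 < N (m + 1) := by
      have := hlam (m + 1)
      nlinarith
    intro n hn hnm
    refine ⟨?_, hpos'⟩
    rcases hnm.eq_or_lt with rfl | hlt
    · simp
    · have hnm' : n ≤ m := by omega
      rw [Nat.succ_sub hnm', pow_succ', mul_assoc]
      refine le_trans ?_ hgrow
      exact mul_le_mul (hlam_mono _ _ hnm) (ih n hn hnm').1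
        (mul_nonneg (pow_nonneg (by linarith [hlam n]) _) (hN0 n)) (by linarith [hlam (m + 1)])

/-- Indices `a` of the dyadic intervals `[a / 2 ^ m, (a + 1) / 2 ^ m]` in `[0, 1]` none of whose
dyadic ancestors is bad. -/
noncomputable def dyadicSurvivors (Bad : ℕ → ℕ → Prop) (m : ℕ) : Finset ℕ := by
  classical exact {a ∈ Finset.range (2 ^ m) | ∀ j ≤ m, ¬ Bad j (a / 2 ^ (m - j))}

lemma mem_dyadicSurvivors {Bad : ℕ → ℕ → Prop} {m a : ℕ} :
    a ∈ dyadicSurvivors Bad m ↔ a < 2 ^ m ∧ ∀ j ≤ m, ¬ Bad j (a / 2 ^ (m - j)) := by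
  simp [dyadicSurvivors]

lemma div_mem_dyadicSurvivors {Bad : ℕ → ℕ → Prop} {n k a : ℕ}
    (h : a ∈ dyadicSurvivors Bad (n + k)) : a / 2 ^ k ∈ dyadicSurvivors Bad n := by
  rw [mem_dyadicSurvivors] at h ⊢
  refine ⟨Nat.div_lt_of_lt_mul (by rw [← pow_add, add_comm]; exact h.1), fun j hj ↦ ?_⟩
  have := h.2 j (by omega)
  rwa [show n + k - j = k + (n - j) by omega, pow_add, ← Nat.div_div_eq_div_mul] at this

lemma mem_dyadicSurvivors_succ {Bad : ℕ → ℕ → Prop} {m a : ℕ}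
    (h : a / 2 ∈ dyadicSurvivors Bad m) (hbad : ¬ Bad (m + 1) a) :
    a ∈ dyadicSurvivors Bad (m + 1) := by
  rw [mem_dyadicSurvivors] at h ⊢
  refine ⟨by rw [pow_succ]; omega, fun j hj ↦ ?_⟩
  rcases hj.eq_or_lt with rfl | hlt
  · simpa using hbad
  · have := h.2 j (by omega)
    rwa [Nat.div_div_eq_div_mul, ← pow_succ', show m - j + 1 = m + 1 - j by omega] at this

open Classical in
lemma two_mul_card_dyadicSurvivors_le (Bad : ℕ → ℕ → Prop) (m : ℕ) :
    2 * (dyadicSurvivors Bad m).card ≤ (dyadicSurvivors Bad (m + 1)).card +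
      {b ∈ Finset.range (2 ^ (m + 1)) | b / 2 ∈ dyadicSurvivors Bad m ∧ Bad (m + 1) b}.card := by
  have h1 : 2 * (dyadicSurvivors Bad m).card =
      ((dyadicSurvivors Bad m ×ˢ Finset.range 2).image fun x ↦ 2 * x.1 + x.2).card := by
    rw [Finset.card_image_of_injOn, Finset.card_product, Finset.card_range, mul_comm]
    rintro ⟨a, e⟩ h ⟨a', e'⟩ h' heq
    simp only [Finset.coe_product, Set.mem_prod, Finset.mem_coe, Finset.mem_range] at h h' heq
    simp only [Prod.mk.injEq]
    omega
  rw [h1]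
  refine le_trans (Finset.card_le_card ?_) (Finset.card_union_le _ _)
  intro b hb
  simp only [Finset.mem_image, Finset.mem_product, Finset.mem_range, Prod.exists] at hb
  obtain ⟨a, e, ⟨ha, he⟩, rfl⟩ := hb
  have hdiv : (2 * a + e) / 2 = a := by omega
  by_cases hbad : Bad (m + 1) (2 * a + e)
  · refine Finset.mem_union_right _ ?_
    have := (mem_dyadicSurvivors.1 ha).1
    simp only [Finset.mem_filter, Finset.mem_range, hdiv]
    exact ⟨by rw [pow_succ]; omega, ha, hbad⟩
  · exact Finset.mem_union_left _ (mem_dyadicSurvivors_succ (by rwa [hdiv]) hbad)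

lemma exists_forall_mem_dyadicInterval {Bad : ℕ → ℕ → Prop}
    (h : ∀ m, (dyadicSurvivors Bad m).Nonempty) :
    ∃ θ : ℝ, ∀ m, ∃ a : ℕ, θ ∈ Set.Icc ((a : ℝ) / 2 ^ m) (((a : ℝ) + 1) / 2 ^ m) ∧ ¬ Bad m a := by
  let K : ℕ → Set ℝ := fun m ↦
    ⋃ a ∈ dyadicSurvivors Bad m, Set.Icc ((a : ℝ) / 2 ^ m) (((a : ℝ) + 1) / 2 ^ m)
  have hcomp : ∀ m, IsCompact (K m) := fun m ↦
    (dyadicSurvivors Bad m).isCompact_biUnion fun _ _ ↦ isCompact_Icc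
  obtain ⟨θ, hθ⟩ := IsCompact.nonempty_iInter_of_sequence_nonempty_isCompact_isClosed K (by
      intro m x hx
      simp only [K, Set.mem_iUnion, exists_prop] at hx ⊢
      obtain ⟨a, ha, hx1, hx2⟩ := hx
      refine ⟨a / 2, by simpa using div_mem_dyadicSurvivors (k := 1) ha, le_trans ?_ hx1,
        hx2.trans ?_⟩
      · have : ((a / 2 : ℕ) : ℝ) * 2 ≤ a := by exact_mod_cast (by omega : a / 2 * 2 ≤ a)
        rw [pow_succ, div_le_div_iff₀ (by positivity) (by positivity)]
        have h2 : (0 : ℝ) < 2 ^ m := by positivity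
        nlinarith
      · have : (a : ℝ) + 1 ≤ (((a / 2 : ℕ) : ℝ) + 1) * 2 := by
          exact_mod_cast (by omega : a + 1 ≤ (a / 2 + 1) * 2)
        rw [pow_succ, div_le_div_iff₀ (by positivity) (by positivity)]
        have h2 : (0 : ℝ) < 2 ^ m := by positivity
        nlinarith)
    (fun m ↦ by
      obtain ⟨a, ha⟩ := h m
      refine ⟨(a : ℝ) / 2 ^ m, Set.mem_biUnion ha ⟨le_rfl, ?_⟩⟩
      gcongr
      linarith)
    (hcomp 0) (fun m ↦ (hcomp m).isClosed)
  refine ⟨θ, fun m ↦ ?_⟩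
  have := Set.mem_iInter.1 hθ m
  simp only [K, Set.mem_iUnion, exists_prop] at this
  obtain ⟨a, ha, hx⟩ := this
  exact ⟨a, hx, by simpa using (mem_dyadicSurvivors.1 ha).2 m le_rfl⟩

/-- A point avoiding two families of bad dyadic intervals: the `B`-bad ones are few inside each
interval of a level preceding theirs by `dyadicDelay`, the `E`-bad ones are few altogether. -/
lemma exists_point_avoiding (B E : ℕ → ℕ → Prop) (n₀ : ℕ) (hn₀ : 2048 ≤ n₀) (x : ℝ)
    (hB : ∀ n, n₀ ≤ n → ∀ (a : ℕ) (T : Finset ℕ),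
      (∀ b ∈ T, B (n + dyadicDelay n) b ∧ b / 2 ^ dyadicDelay n = a) → T.card ≤ 12 * (n + 1))
    (hB' : ∀ m b, B m b → ∃ n, n₀ ≤ n ∧ m = n + dyadicDelay n)
    (hE : ∀ (m : ℕ) (T : Finset ℕ), (∀ b ∈ T, E m b) → (T.card : ℝ) ≤ 4 * x ^ m)
    (hE' : ∀ m b, E m b → n₀ < m)
    (hx : ∀ m, n₀ ≤ m → 8 * dyadicDelay (m + 1) * x ^ (m + 1) ≤
      (2 - 1 / (dyadicDelay n₀ : ℝ)) ^ m) :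
    ∃ θ : ℝ, ∀ m, ∃ a : ℕ, θ ∈ Set.Icc ((a : ℝ) / 2 ^ m) (((a : ℝ) + 1) / 2 ^ m) ∧
      ¬ B m a ∧ ¬ E m a := by
  classical
  let Bad : ℕ → ℕ → Prop := fun m a ↦ B m a ∨ E m a
  let S := dyadicSurvivors Bad
  have hfull : ∀ m, m ≤ n₀ → S m = Finset.range (2 ^ m) := by
    intro m hm
    ext a
    simp only [S, mem_dyadicSurvivors, Finset.mem_range, and_iff_left_iff_imp]
    rintro - j hj (h | h)
    · obtain ⟨n, hn, rfl⟩ := hB' _ _ h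
      have : 0 < dyadicDelay n := by unfold dyadicDelay; omega
      omega
    · have := hE' _ _ h
      omega
  let b : ℕ → ℕ := fun m ↦
    {a ∈ Finset.range (2 ^ m) | a / 2 ∈ S (m - 1) ∧ B m a}.card
  let e : ℕ → ℕ := fun m ↦ {a ∈ Finset.range (2 ^ m) | E m a}.card
  have hpos : ∀ m, n₀ ≤ m → (0 : ℝ) < (S m).card := by
    refine fun m hm ↦ nearly_doubling (fun m ↦ ((S m).card : ℝ)) (fun m ↦ b m) (fun m ↦ e m) n₀ hn₀
      ?_ (fun _ ↦ by positivity) ?_ ?_ ?_ ?_ m hm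
    · simp [hfull n₀ le_rfl]
    · intro m _
      have h := two_mul_card_dyadicSurvivors_le Bad m
      have h3 : 2 * (S m).card ≤ (S (m + 1)).card + b (m + 1) + e (m + 1) := by
        refine h.trans ?_
        rw [add_assoc]
        refine Nat.add_le_add_left
          (le_trans (Finset.card_le_card ?_) (Finset.card_union_le _ _)) _
        intro a ha
        simp only [Finset.mem_filter, Finset.mem_union, Bad, S, Nat.add_sub_cancel] at ha ⊢
        tauto
      exact_mod_cast h3
    · intro n hn
      have h : b (n + dyadicDelay n) ≤ 12 * (n + 1) * (S n).card := by
        refine Finset.card_le_mul_card_image_of_maps_to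
          (f := fun a ↦ a / 2 ^ dyadicDelay n) ?_ _ ?_
        · intro a ha
          simp only [Finset.mem_filter] at ha
          have hL : 0 < dyadicDelay n := by unfold dyadicDelay; omega
          have h1 := ha.2.1
          rw [show n + dyadicDelay n - 1 = n + (dyadicDelay n - 1) by omega] at h1
          have h2 := div_mem_dyadicSurvivors h1
          rwa [Nat.div_div_eq_div_mul, ← pow_succ', Nat.sub_add_cancel hL] at h2
        · intro a _
          refine hB n hn a _ fun c hc ↦ ?_
          simp only [Finset.mem_filter] at hc
          exact ⟨hc.1.2.2, hc.2⟩
      exact_mod_cast h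
    · intro m hm
      have : b m = 0 := by
        simp only [b, Finset.card_eq_zero, Finset.filter_eq_empty_iff]
        rintro a - ⟨-, h⟩
        obtain ⟨n, hn, rfl⟩ := hB' _ _ h
        exact hm n hn rfl
      simp [this]
    · intro m hm
      have h1 : (e (m + 1) : ℝ) ≤ 4 * x ^ (m + 1) := hE _ _ fun c hc ↦ (Finset.mem_filter.1 hc).2
      have hD : (1 : ℝ) ≤ dyadicDelay n₀ := by
        exact_mod_cast (by unfold dyadicDelay; omega : 1 ≤ dyadicDelay n₀)
      have hl : 0 ≤ 2 - 1 / (dyadicDelay n₀ : ℝ) := by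
        have : 1 / (dyadicDelay n₀ : ℝ) ≤ 1 := by rw [div_le_one (by linarith)]; exact hD
        linarith
      have hl2 : 2 - 1 / (dyadicDelay n₀ : ℝ) ≤ 2 := by
        have : 0 ≤ 1 / (dyadicDelay n₀ : ℝ) := by positivity
        linarith
      have hN : ((S n₀).card : ℝ) = 2 ^ n₀ := by simp [hfull n₀ le_rfl]
      rw [hN]
      calc 2 * (dyadicDelay (m + 1) : ℝ) * e (m + 1)
          ≤ 2 * (dyadicDelay (m + 1) : ℝ) * (4 * x ^ (m + 1)) := by gcongr
        _ = 8 * dyadicDelay (m + 1) * x ^ (m + 1) := by ring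
        _ ≤ _ := hx m hm
        _ = (2 - 1 / (dyadicDelay n₀ : ℝ)) ^ (m - n₀) *
              (2 - 1 / (dyadicDelay n₀ : ℝ)) ^ n₀ := by
            rw [← pow_add, Nat.sub_add_cancel hm]
        _ ≤ _ := by gcongr
  obtain ⟨θ, hθ⟩ := exists_forall_mem_dyadicInterval (Bad := Bad) fun m ↦ by
    rcases le_total m n₀ with hm | hm
    · exact ⟨0, by rw [show dyadicSurvivors Bad m = _ from hfull m hm]; simp⟩
    · exact Finset.card_pos.1 (by exact_mod_cast hpos m hm)
  refine ⟨θ, fun m ↦ ?_⟩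
  obtain ⟨a, ha, hb⟩ := hθ m
  exact ⟨a, ha, fun h ↦ hb (Or.inl h), fun h ↦ hb (Or.inr h)⟩

/-- Two rationals with denominators of size less than `√(2 ^ (n + 1) * P)` and divisible by `P`
coincide as soon as they are at distance less than `1 / 2 ^ (n + 1)`. -/
lemma div_eq_div_of_abs_sub_lt {P q q' n : ℕ} {r r' : ℤ} (hq : 0 < q) (hq' : 0 < q')
    (hP : P ∣ q) (hP' : P ∣ q') (hlt : q ^ 2 < 2 ^ (n + 1) * P) (hlt' : q' ^ 2 < 2 ^ (n + 1) * P)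
    (h : |(r : ℝ) / q - r' / q'| < 1 / 2 ^ (n + 1)) : (r : ℝ) / q = r' / q' := by
  obtain ⟨u, rfl⟩ := hP
  obtain ⟨v, rfl⟩ := hP'
  have hP0 : 0 < P := Nat.pos_of_mul_pos_right hq
  have hu0 : 0 < u := Nat.pos_of_mul_pos_left hq
  have hv0 : 0 < v := Nat.pos_of_mul_pos_left hq'
  have hu : P * u ^ 2 < 2 ^ (n + 1) := by
    refine lt_of_mul_lt_mul_right ?_ hP0.le
    linarith [show (P * u) ^ 2 = P * u ^ 2 * P by ring]
  have hv : P * v ^ 2 < 2 ^ (n + 1) := by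
    refine lt_of_mul_lt_mul_right ?_ hP0.le
    linarith [show (P * v) ^ 2 = P * v ^ 2 * P by ring]
  have huv : P * (u * v) < 2 ^ (n + 1) := by
    rcases le_total u v with huv | huv
    · exact lt_of_le_of_lt (Nat.mul_le_mul_left _ (by nlinarith)) hv
    · exact lt_of_le_of_lt (Nat.mul_le_mul_left _ (by nlinarith)) hu
  have huv' : (P * (u * v) : ℝ) < 2 ^ (n + 1) := by exact_mod_cast huv
  have hP1 : (0 : ℝ) < P := by exact_mod_cast hP0
  have hu1 : (0 : ℝ) < u := by exact_mod_cast hu0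
  have hv1 : (0 : ℝ) < v := by exact_mod_cast hv0
  have hsub : (r : ℝ) / (P * u : ℕ) - r' / (P * v : ℕ) =
      ((r * v - r' * u : ℤ) : ℝ) / (P * (u * v)) := by
    push_cast
    field_simp
  have hD : r * v - r' * u = 0 := by
    by_contra hne
    have h1 : (1 : ℝ) ≤ |((r * v - r' * u : ℤ) : ℝ)| := by
      exact_mod_cast Int.one_le_abs hne
    have hpos : (0 : ℝ) < P * (u * v) := by positivity
    rw [hsub, abs_div, abs_of_pos hpos, div_lt_div_iff₀ hpos (by positivity)] at h
    have h2 : (0 : ℝ) < 2 ^ (n + 1) := by positivity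
    nlinarith
  rw [← sub_eq_zero, hsub, hD]
  simp

/-- The dyadic interval of level `m` and index `b` comes within `1 / 2 ^ m` of a rational `r / q`
with `q ^ 2 / p ^ k ∈ [2 ^ n, 2 ^ (n + 1))` for some `p ^ k ∣ q`. -/
def NearRational (p n m b : ℕ) : Prop :=
  ∃ (k q : ℕ) (r : ℤ), 0 < q ∧ p ^ k ∣ q ∧ 2 ^ n * p ^ k ≤ q ^ 2 ∧ q ^ 2 < 2 ^ (n + 1) * p ^ k ∧
    ∃ y ∈ Set.Icc ((b : ℝ) / 2 ^ m) (((b : ℝ) + 1) / 2 ^ m), |y - r / q| < 1 / 2 ^ m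

lemma card_nearRational_le {p n L a : ℕ} (hp : 2 ≤ p) (hL : 0 < L) (T : Finset ℕ)
    (hT : ∀ b ∈ T, NearRational p n (n + L) b ∧ b / 2 ^ L = a) : T.card ≤ 12 * (n + 1) := by
  choose! k q r hq hdvd hge hlt y hy hyr using fun b hb ↦ (hT b hb).1
  have hmaps : ∀ b ∈ T, (k b, ⌊(r b : ℝ) / q b * 2 ^ (n + 1)⌋,
      (b : ℤ) - ⌊(r b : ℝ) / q b * 2 ^ (n + L)⌋) ∈
      Finset.range (n + 1) ×ˢ Finset.Icc (2 * (a : ℤ) - 1) (2 * a + 2) ×ˢ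
        Finset.Icc (-1 : ℤ) 1 := by
    intro b hb
    simp only [Finset.mem_product, Finset.mem_range, Finset.mem_Icc]
    have h1 : (1 : ℝ) ≤ 2 ^ (n + L) := one_le_pow₀ (by norm_num)
    have hy1 := (div_le_iff₀ (by positivity)).1 (hy b hb).1
    have hy2 := (le_div_iff₀ (by positivity)).1 (hy b hb).2
    obtain ⟨hyr1, hyr2⟩ := abs_lt.1 (hyr b hb)
    have hone : (1 : ℝ) / 2 ^ (n + L) * 2 ^ (n + L) = 1 := by field_simp
    set P : ℝ := (r b : ℝ) / q b
    have hPlo : (b : ℝ) - 1 < P * 2 ^ (n + L) := by nlinarith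
    have hPhi : P * 2 ^ (n + L) < b + 2 := by nlinarith
    have hba : 2 ^ L * a ≤ b := by rw [← (hT b hb).2]; exact Nat.mul_div_le _ _
    have hba' : b + 1 ≤ 2 ^ L * (a + 1) := by
      rw [← (hT b hb).2]; exact Nat.lt_mul_div_succ b (by positivity)
    have hbaR : (2 : ℝ) ^ L * a ≤ b := by exact_mod_cast hba
    have hbaR' : (b : ℝ) + 1 ≤ 2 ^ L * (a + 1) := by exact_mod_cast hba'
    have hL2 : (2 : ℝ) ≤ 2 ^ L := le_self_pow₀ (by norm_num) hL.ne'
    have hsplit : P * 2 ^ (n + L) * 2 = P * 2 ^ (n + 1) * 2 ^ L := by ring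
    refine ⟨?_, ⟨?_, ?_⟩, ?_, ?_⟩
    · have h2 : p ^ k b ≤ q b := Nat.le_of_dvd (hq b hb) (hdvd b hb)
      have h3 : p ^ k b < 2 ^ (n + 1) := by
        have := hlt b hb
        have : 0 < p ^ k b := by positivity
        by_contra! hcon
        nlinarith
      have h4 : 2 ^ k b ≤ p ^ k b := Nat.pow_le_pow_left hp _
      exact (Nat.pow_lt_pow_iff_right (by norm_num)).1 (h4.trans_lt h3)
    · rw [Int.le_floor]
      push_cast
      by_contra! hcon
      nlinarith
    · rw [← Int.lt_add_one_iff, Int.floor_lt]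
      push_cast
      by_contra! hcon
      nlinarith
    · have : ⌊P * 2 ^ (n + L)⌋ < (b : ℤ) + 2 := by
        rw [Int.floor_lt]; push_cast; exact hPhi
      omega
    · have : (b : ℤ) - 1 ≤ ⌊P * 2 ^ (n + L)⌋ := by
        rw [Int.le_floor]; push_cast; exact hPlo.le
      omega
  have hinj : Set.InjOn (fun b ↦ (k b, ⌊(r b : ℝ) / q b * 2 ^ (n + 1)⌋,
      (b : ℤ) - ⌊(r b : ℝ) / q b * 2 ^ (n + L)⌋)) T := by
    intro b hb b' hb' heq
    simp only [Prod.mk.injEq] at heq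
    obtain ⟨hk, hfl, hoff⟩ := heq
    have hlt1 := hlt b' hb'
    have hdvd1 := hdvd b' hb'
    rw [← hk] at hlt1 hdvd1
    have hPP : (r b : ℝ) / q b = r b' / q b' := by
      refine div_eq_div_of_abs_sub_lt (hq b hb) (hq b' hb') (hdvd b hb) hdvd1 (hlt b hb) hlt1 ?_
      have h1 := Int.abs_sub_lt_one_of_floor_eq_floor hfl
      rw [← sub_mul, abs_mul, abs_of_pos (by positivity : (0 : ℝ) < 2 ^ (n + 1))] at h1
      rwa [lt_div_iff₀ (by positivity)]
    rw [hPP] at hoff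
    omega
  refine (Finset.card_le_card_of_injOn _ hmaps hinj).trans ?_
  simp only [Finset.card_product, Finset.card_range, Int.card_Icc]
  have h1 : (2 * (a : ℤ) + 2 + 1 - (2 * (a : ℤ) - 1)).toNat = 4 := by omega
  have h2 : ((1 : ℤ) + 1 - -1).toNat = 3 := rfl
  rw [h1, h2]
  omega

lemma card_dyadic_meeting_le (U : ℕ → Set ℝ) (m : ℕ) (F : Finset ℕ)
    (hU : ∀ i ∈ F, ∀ u ∈ U i, ∀ v ∈ U i, |u - v| ≤ 1 / 2 ^ m) (T : Finset ℕ)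
    (hT : ∀ b ∈ T, ∃ i ∈ F, ∃ y ∈ U i,
      y ∈ Set.Icc ((b : ℝ) / 2 ^ m) (((b : ℝ) + 1) / 2 ^ m)) : T.card ≤ 4 * F.card := by
  classical
  choose! i hiF y hyU hy using hT
  let u : ℕ → ℝ := fun j ↦ if h : (U j).Nonempty then h.some else 0
  have hu : ∀ b ∈ T, u (i b) ∈ U (i b) := by
    intro b hb
    have h : (U (i b)).Nonempty := ⟨_, hyU b hb⟩
    simp only [u, dif_pos h]
    exact h.some_mem
  have hmaps : ∀ b ∈ T, (i b, (b : ℤ) - ⌊u (i b) * 2 ^ m⌋) ∈ F ×ˢ Finset.Icc (-2 : ℤ) 1 := by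
    intro b hb
    simp only [Finset.mem_product, Finset.mem_Icc]
    have hm : (0 : ℝ) < 2 ^ m := by positivity
    have hy1 := (div_le_iff₀ hm).1 (hy b hb).1
    have hy2 := (le_div_iff₀ hm).1 (hy b hb).2
    obtain ⟨h1, h2⟩ := abs_le.1 (hU _ (hiF b hb) _ (hu b hb) _ (hyU b hb))
    have hone : (1 : ℝ) / 2 ^ m * 2 ^ m = 1 := by field_simp
    have hlo : (b : ℝ) - 1 ≤ u (i b) * 2 ^ m := by nlinarith
    have hhi : u (i b) * 2 ^ m ≤ b + 2 := by nlinarith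
    have h3 : (b : ℤ) - 1 ≤ ⌊u (i b) * 2 ^ m⌋ := by rw [Int.le_floor]; push_cast; exact hlo
    have h4 : ⌊u (i b) * 2 ^ m⌋ ≤ (b : ℤ) + 2 := by
      have := (Int.floor_le (u (i b) * 2 ^ m)).trans hhi
      exact_mod_cast this
    exact ⟨hiF b hb, by omega, by omega⟩
  have hinj : Set.InjOn (fun b ↦ (i b, (b : ℤ) - ⌊u (i b) * 2 ^ m⌋)) T := by
    intro b _ b' _ heq
    simp only [Prod.mk.injEq] at heq
    obtain ⟨h1, h2⟩ := heq
    rw [h1] at h2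
    omega
  refine (Finset.card_le_card_of_injOn _ hmaps hinj).trans ?_
  simp only [Finset.card_product, Int.card_Icc]
  have h1 : ((1 : ℤ) + 1 - -2).toNat = 4 := rfl
  rw [h1]
  omega

lemma le_mul_abs_sub_of_log {q h k p n : ℕ} (hp : 0 < p) (hq : 0 < q)
    (hh : q ^ 2 = h * p ^ k) (hn : 2048 ≤ n) (hnh : 2 ^ n ≤ h) {d : ℝ}
    (hd : 1 / 2 ^ (n + dyadicDelay n) ≤ d) :
    1 / 24576 ≤ (q : ℝ) * Real.log q * Real.log (Real.log q) * (p : ℝ) ^ (-(k : ℤ)) * (q * d) := by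
  have hlog2 : (0.6931471803 : ℝ) < Real.log 2 := Real.log_two_gt_d9
  have hp0 : (0 : ℝ) < p := by exact_mod_cast hp
  have hq0 : (0 : ℝ) < q := by exact_mod_cast hq
  have hn0 : (2048 : ℝ) ≤ n := by exact_mod_cast hn
  have hhq : (2 : ℝ) ^ n ≤ (q : ℝ) ^ 2 := by
    have : 2 ^ n ≤ q ^ 2 := by
      rw [hh]; exact hnh.trans (Nat.le_mul_of_pos_right _ (by positivity))
    exact_mod_cast this
  have hlogq : (n : ℝ) / 3 ≤ Real.log q := by
    have := Real.log_le_log (by positivity) hhq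
    rw [Real.log_pow, Real.log_pow] at this
    push_cast at this
    nlinarith
  have hsq : (n : ℝ) ≤ ((n : ℝ) / 3) ^ 2 := by nlinarith
  have hlogn : Real.log n / 2 ≤ Real.log (n / 3) := by
    have := Real.log_le_log (by positivity) hsq
    rw [Real.log_pow] at this
    push_cast at this
    linarith
  have hw : (Nat.log 2 n : ℝ) / 2 ≤ Real.log n := by
    have h1 : (2 : ℝ) ^ Nat.log 2 n ≤ n := by
      exact_mod_cast Nat.pow_log_le_self 2 (by omega)
    have := Real.log_le_log (by positivity) h1
    rw [Real.log_pow] at this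
    have h2 : (0 : ℝ) ≤ Nat.log 2 n := by positivity
    nlinarith
  have hloglog : (Nat.log 2 n : ℝ) / 4 ≤ Real.log (Real.log q) := by
    have := Real.log_le_log (by positivity) hlogq
    linarith
  have hlog0 : 0 ≤ Real.log q := le_trans (by positivity) hlogq
  have hloglog0 : 0 ≤ Real.log (Real.log q) := le_trans (by positivity) hloglog
  have hpk : (q : ℝ) * (p : ℝ) ^ (-(k : ℤ)) * q = h := by
    have : (q : ℝ) ^ 2 = h * p ^ k := by exact_mod_cast hh
    rw [zpow_neg, zpow_natCast]
    field_simp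
    linarith
  have hnh' : (2 : ℝ) ^ n ≤ h := by exact_mod_cast hnh
  have hD : (2 : ℝ) ^ dyadicDelay n ≤ n * Nat.log 2 n * 2048 := by
    exact_mod_cast two_pow_dyadicDelay_le (by omega : 2 ≤ n)
  calc (1 : ℝ) / 24576
      ≤ 2 ^ n * (n / 3) * (Nat.log 2 n / 4) * (1 / 2 ^ (n + dyadicDelay n)) := by
        rw [pow_add, mul_one_div, div_le_div_iff₀ (by norm_num) (by positivity)]
        have h2 : (0 : ℝ) < 2 ^ n := by positivity
        nlinarith
    _ ≤ h * Real.log q * Real.log (Real.log q) * d := by gcongr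
    _ = _ := by rw [← hpk]; ring

/-- A number that avoids all the intervals singled out by `NearRational` is multiplicatively badly
approximable in the logarithmic sense. -/
lemma eventually_le_of_not_nearRational {p n₀ : ℕ} (hp : p.Prime) (hn₀ : 2048 ≤ n₀) {θ : ℝ}
    (hθ : ∀ n, n₀ ≤ n → ∃ a : ℕ, θ ∈ Set.Icc ((a : ℝ) / 2 ^ (n + dyadicDelay n))
      (((a : ℝ) + 1) / 2 ^ (n + dyadicDelay n)) ∧ ¬ NearRational p n (n + dyadicDelay n) a) :
    ∀ᶠ q : ℕ in atTop, 1 / 24576 ≤ (q : ℝ) * Real.log q * Real.log (Real.log q) *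
      (p : ℝ) ^ (-(padicValNat p q : ℤ)) * nint (q * θ) := by
  filter_upwards [eventually_ge_atTop (2 ^ n₀)] with q hq
  have hq0 : 0 < q := lt_of_lt_of_le (by positivity) hq
  set k := padicValNat p q
  have hdvd : p ^ k ∣ q := pow_padicValNat_dvd
  have hpk : 0 < p ^ k := pow_pos hp.pos k
  obtain ⟨v, hv⟩ := hdvd
  have hv0 : 0 < v := by
    rcases Nat.eq_zero_or_pos v with rfl | h
    · simp at hv; omega
    · exact h
  set h := q * v
  have hh : q ^ 2 = h * p ^ k := by
    calc q ^ 2 = q * (p ^ k * v) := by rw [← hv, sq]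
      _ = h * p ^ k := by ring
  have hh0 : h ≠ 0 := (Nat.mul_pos hq0 hv0).ne'
  have hn1 : 2 ^ Nat.log 2 h ≤ h := Nat.pow_log_le_self 2 hh0
  have hn2 : h < 2 ^ (Nat.log 2 h + 1) := Nat.lt_pow_succ_log_self (by norm_num) h
  have hn3 : n₀ ≤ Nat.log 2 h :=
    Nat.le_log_of_pow_le (by norm_num) (hq.trans (Nat.le_mul_of_pos_right _ hv0))
  obtain ⟨a, ha, hnear⟩ := hθ _ hn3
  have hnint : nint (q * θ) = q * |θ - (round (q * θ) : ℤ) / q| := by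
    have hq1 : (0 : ℝ) < q := by exact_mod_cast hq0
    unfold nint
    rw [← abs_of_pos hq1, ← abs_mul, abs_of_pos hq1, mul_sub, mul_div_cancel₀ _ hq1.ne']
  rw [hnint]
  refine le_mul_abs_sub_of_log hp.pos hq0 hh (hn₀.trans hn3) hn1 ?_
  by_contra! hcon
  refine hnear ⟨k, q, round (q * θ), hq0, ⟨v, hv⟩, ?_, ?_, θ, ha, hcon⟩
  · rw [hh]; exact Nat.mul_le_mul_right _ hn1
  · rw [hh]; exact Nat.mul_lt_mul_of_pos_right hn2 hpk

lemma exists_level_bound {x : ℝ} (hx0 : 0 < x) (hx2 : x < 2) :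
    ∃ n₀, 2048 ≤ n₀ ∧ ∀ m, n₀ ≤ m → 8 * dyadicDelay (m + 1) * x ^ (m + 1) ≤
      (2 - 1 / (dyadicDelay n₀ : ℝ)) ^ m := by
  obtain ⟨l, hl1, hl2⟩ := exists_between hx2
  have hl0 : 0 < l := hx0.trans hl1
  have hdelay : Tendsto (fun n ↦ (dyadicDelay n : ℝ)) atTop atTop := by
    refine tendsto_natCast_atTop_atTop.comp (tendsto_atTop_mono (f := Nat.log 2) ?_ ?_)
    · intro n; unfold dyadicDelay; omega
    · exact tendsto_atTop.2 fun b ↦ (eventually_ge_atTop (2 ^ b)).mono fun n hn ↦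
        Nat.le_log_of_pow_le (by norm_num) hn
  have h1 : ∀ᶠ n in atTop, l ≤ 2 - 1 / (dyadicDelay n : ℝ) := by
    have : Tendsto (fun n ↦ 2 - 1 / (dyadicDelay n : ℝ)) atTop (nhds (2 - 0)) :=
      tendsto_const_nhds.sub (tendsto_const_nhds.div_atTop hdelay)
    exact this.eventually_const_le (by linarith)
  have hr0 : 0 ≤ x / l := by positivity
  have hr1 : x / l < 1 := by rwa [div_lt_one hl0]
  have h2 : Tendsto (fun m : ℕ ↦ 8 * x * (2 * (m * (x / l) ^ m) + 13 * (x / l) ^ m)) atTop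
      (nhds (8 * x * (2 * 0 + 13 * 0))) :=
    (((tendsto_self_mul_const_pow_of_lt_one hr0 hr1).const_mul 2).add
      ((tendsto_pow_atTop_nhds_zero_of_lt_one hr0 hr1).const_mul 13)).const_mul _
  have h3 := h2.eventually_le_const (u := 1) (by norm_num)
  obtain ⟨a, ha⟩ := eventually_atTop.1 (h1.and h3)
  refine ⟨max a 2048, le_max_right _ _, fun m hm ↦ ?_⟩
  have h4 := (ha m ((le_max_left _ _).trans hm)).2
  have h5 := (ha (max a 2048) (le_max_left _ _)).1
  refine le_trans ?_ (pow_le_pow_left₀ hl0.le h5 m)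
  have h6 : (dyadicDelay (m + 1) : ℝ) ≤ 2 * m + 13 := by
    have h7 := dyadicDelay_le (m + 1)
    have h8 := Nat.log_le_self 2 (m + 1)
    exact_mod_cast (by omega : dyadicDelay (m + 1) ≤ 2 * m + 13)
  calc 8 * (dyadicDelay (m + 1) : ℝ) * x ^ (m + 1)
      ≤ 8 * (2 * m + 13) * x ^ (m + 1) := by gcongr
    _ = 8 * x * (2 * (m * (x / l) ^ m) + 13 * (x / l) ^ m) * l ^ m := by
        rw [div_pow]; field_simp; ring
    _ ≤ 1 * l ^ m := by gcongr
    _ = l ^ m := one_mul _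

lemma exists_mem_of_small_cover {p : ℕ} (hp : p.Prime) {x : ℝ} (hx0 : 0 < x) (hx2 : x < 2) :
    ∃ n₀ : ℕ, ∀ (U : ℕ → Set ℝ) (ν : ℕ → ℕ),
      (∀ i, ∀ u ∈ U i, ∀ v ∈ U i, |u - v| ≤ 1 / 2 ^ ν i) → (∀ i, n₀ < ν i) →
      (∀ m, ∃ F : Finset ℕ, (∀ i, i ∈ F ↔ ν i = m) ∧ (F.card : ℝ) ≤ x ^ m) →
      ∃ θ : ℝ, (∀ i, θ ∉ U i) ∧ ∀ᶠ q : ℕ in atTop, 1 / 24576 ≤ (q : ℝ) * Real.log q *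
        Real.log (Real.log q) * (p : ℝ) ^ (-(padicValNat p q : ℤ)) * nint (q * θ) := by
  obtain ⟨n₀, hn₀, hlevel⟩ := exists_level_bound hx0 hx2
  refine ⟨n₀, fun U ν hU hν hF ↦ ?_⟩
  choose F hFmem hFcard using hF
  obtain ⟨θ, hθ⟩ := exists_point_avoiding
    (fun m b ↦ ∃ n, n₀ ≤ n ∧ m = n + dyadicDelay n ∧ NearRational p n m b)
    (fun m b ↦ ∃ i ∈ F m, ∃ y ∈ U i, y ∈ Set.Icc ((b : ℝ) / 2 ^ m) (((b : ℝ) + 1) / 2 ^ m))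
    n₀ hn₀ x
    (by
      intro n hn a T hT
      refine card_nearRational_le (a := a) hp.two_le
        (by unfold dyadicDelay; omega : 0 < dyadicDelay n) T fun b hb ↦ ⟨?_, (hT b hb).2⟩
      obtain ⟨n', -, heq, hnear⟩ := (hT b hb).1
      have hmono : StrictMono fun n ↦ n + dyadicDelay n :=
        strictMono_id.add_monotone dyadicDelay_mono
      obtain rfl : n = n' := hmono.injective heq
      exact hnear)
    (fun m b ⟨n, hn, hm, _⟩ ↦ ⟨n, hn, hm⟩)
    (by
      intro m T hT
      have h := card_dyadic_meeting_le U m (F m)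
        (fun i hi ↦ by rw [← (hFmem m i).1 hi]; exact hU i) T hT
      have h' : (T.card : ℝ) ≤ 4 * (F m).card := by exact_mod_cast h
      linarith [hFcard m])
    (fun m b ⟨i, hi, _⟩ ↦ by rw [← (hFmem m i).1 hi]; exact hν i)
    hlevel
  refine ⟨θ, fun i hi ↦ ?_, eventually_le_of_not_nearRational hp hn₀ fun n hn ↦ ?_⟩
  · obtain ⟨a, ha, -, hE⟩ := hθ (ν i)
    exact hE ⟨i, (hFmem _ i).2 rfl, θ, hi, ha⟩
  · obtain ⟨a, ha, hB, -⟩ := hθ (n + dyadicDelay n)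
    exact ⟨a, ha, fun h ↦ hB ⟨n, hn, rfl, h⟩⟩

lemma exists_dyadic_scale {s d ε : ℝ} (hs0 : 0 < s) (hs1 : s ≤ 1) (hd0 : 0 ≤ d) (hd1 : d ≤ 1)
    (hε : 0 < ε) : ∃ n : ℕ, d ≤ 1 / 2 ^ n ∧ (((2 : ℝ) ^ s) ^ n)⁻¹ ≤ 2 * d ^ s + ε := by
  have hx1 : 1 < (2 : ℝ) ^ s := Real.one_lt_rpow (by norm_num) hs0
  have hx2 : (2 : ℝ) ^ s ≤ 2 := by
    simpa using Real.rpow_le_rpow_of_exponent_le (by norm_num : (1 : ℝ) ≤ 2) hs1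
  rcases hd0.eq_or_lt with rfl | hd
  · obtain ⟨n, hn⟩ := exists_pow_lt_of_lt_one hε (inv_lt_one_of_one_lt₀ hx1)
    refine ⟨n, by positivity, ?_⟩
    rw [← inv_pow, Real.zero_rpow hs0.ne']
    linarith
  · obtain ⟨n, hn1, hn2⟩ := exists_nat_pow_near_of_lt_one hd hd1
      (by norm_num : (0 : ℝ) < 1 / 2) (by norm_num)
    refine ⟨n, by simpa using hn2, ?_⟩
    have h1 : ((1 / 2 : ℝ) ^ (n + 1)) ^ s ≤ d ^ s := by gcongr
    have h2 : ((1 / 2 : ℝ) ^ (n + 1)) ^ s = (((2 : ℝ) ^ s) ^ n)⁻¹ * ((2 : ℝ) ^ s)⁻¹ := by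
      rw [← Real.rpow_natCast, ← Real.rpow_mul (by norm_num), mul_comm, Real.rpow_mul (by norm_num),
        Real.rpow_natCast, one_div, Real.inv_rpow (by norm_num), pow_succ, inv_pow]
    rw [h2, mul_inv_le_iff₀ (by linarith)] at h1
    have h3 : 0 ≤ d ^ s := by positivity
    nlinarith

/-- Badziahin–Velani theorem for the mixed (p-adic) Littlewood conjecture. -/
theorem stmt4 (p : ℕ) (hp : p.Prime) :
    dimH {θ : ℝ | ∃ c : ℝ, 0 < c ∧ ∀ᶠ q : ℕ in atTop,
      c ≤ (q : ℝ) * Real.log q * Real.log (Real.log q) *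
            (p : ℝ) ^ (-(padicValNat p q : ℤ)) * nint (q * θ)} = 1 := by
  set K : Set ℝ := {θ : ℝ | ∃ c : ℝ, 0 < c ∧ ∀ᶠ q : ℕ in atTop,
      c ≤ (q : ℝ) * Real.log q * Real.log (Real.log q) *
            (p : ℝ) ^ (-(padicValNat p q : ℤ)) * nint (q * θ)}
  refine le_antisymm ((dimH_mono (Set.subset_univ _)).trans_eq Real.dimH_univ) ?_
  by_contra! hlt
  obtain ⟨s, hKs, hs1⟩ := ENNReal.lt_iff_exists_nnreal_btwn.1 hlt
  have hs1' : (s : ℝ) < 1 := by exact_mod_cast hs1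
  have hs0 : (0 : ℝ) < s := by
    have : (0 : ENNReal) < s := lt_of_le_of_lt zero_le hKs
    exact_mod_cast this
  have hx1 : 1 < (2 : ℝ) ^ (s : ℝ) := Real.one_lt_rpow (by norm_num) hs0
  have hx2 : (2 : ℝ) ^ (s : ℝ) < 2 := by
    simpa using Real.rpow_lt_rpow_of_exponent_lt (by norm_num : (1 : ℝ) < 2) hs1'
  set x : ℝ := (2 : ℝ) ^ (s : ℝ)
  have hx0 : 0 < x := by linarith
  obtain ⟨n₀, hcover⟩ := exists_mem_of_small_cover hp hx0 hx2
  have hμ := hausdorffMeasure_of_dimH_lt hKs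
  rw [MeasureTheory.Measure.hausdorffMeasure_apply] at hμ
  have hμ1 := (iSup₂_le_iff.1 hμ.le) 1 one_pos
  set δ : ENNReal := ENNReal.ofReal ((x ^ n₀)⁻¹) / 4
  have hδ : 0 < δ := ENNReal.div_pos (by simpa using by positivity) (by norm_num)
  obtain ⟨t, hKt, htd, htsum⟩ : ∃ t : ℕ → Set ℝ, K ⊆ ⋃ n, t n ∧ (∀ n, Metric.ediam (t n) ≤ 1) ∧
      ∑' n, ⨆ _ : (t n).Nonempty, Metric.ediam (t n) ^ (s : ℝ) < δ := by
    have := lt_of_le_of_lt hμ1 hδ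
    simp only [iInf_lt_iff] at this
    obtain ⟨t, h1, h2, h3⟩ := this
    exact ⟨t, h1, h2, h3⟩
  obtain ⟨ε, hε, hεsum⟩ := ENNReal.exists_pos_sum_of_countable hδ.ne' ℕ
  have hdt : ∀ i, Metric.ediam (t i) ≠ ⊤ := fun i ↦ ne_top_of_le_ne_top ENNReal.one_ne_top (htd i)
  choose ν hν1 hν2 using fun i ↦ exists_dyadic_scale (d := (Metric.ediam (t i)).toReal) hs0
    hs1'.le ENNReal.toReal_nonneg (by simpa using ENNReal.toReal_mono ENNReal.one_ne_top (htd i))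
    (NNReal.coe_pos.2 (hε i))
  let w : ℕ → ENNReal := fun i ↦ ENNReal.ofReal ((x ^ ν i)⁻¹)
  have hw : ∀ i, w i ≤ 2 * (⨆ _ : (t i).Nonempty, Metric.ediam (t i) ^ (s : ℝ)) + ε i := by
    intro i
    refine (ENNReal.ofReal_le_ofReal (hν2 i)).trans ?_
    rw [ENNReal.ofReal_add (by positivity) (by positivity), ENNReal.ofReal_mul (by norm_num),
      ← ENNReal.ofReal_rpow_of_nonneg ENNReal.toReal_nonneg hs0.le, ENNReal.ofReal_toReal (hdt i),
      ENNReal.ofReal_coe_nnreal, ENNReal.ofReal_ofNat]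
    gcongr
    rcases (t i).eq_empty_or_nonempty with h | h
    · simp [h, hs0]
    · simp [h]
  have hwsum : ∑' i, w i < ENNReal.ofReal ((x ^ n₀)⁻¹) := by
    calc ∑' i, w i ≤ ∑' i, (2 * (⨆ _ : (t i).Nonempty, Metric.ediam (t i) ^ (s : ℝ)) + ε i) :=
          ENNReal.tsum_le_tsum hw
      _ = 2 * (∑' i, ⨆ _ : (t i).Nonempty, Metric.ediam (t i) ^ (s : ℝ)) +
            ∑' i, (ε i : ENNReal) := by
          rw [ENNReal.tsum_add, ENNReal.tsum_mul_left]
      _ < 2 * δ + 2 * δ := by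
          refine ENNReal.add_lt_add ?_ (hεsum.trans_le ?_)
          · exact ENNReal.mul_lt_mul_right (by norm_num) (by norm_num) htsum
          · exact le_mul_of_one_le_left' (by norm_num)
      _ = ENNReal.ofReal ((x ^ n₀)⁻¹) := by
          rw [← add_mul, show (2 : ENNReal) + 2 = 4 by norm_num]
          exact ENNReal.mul_div_cancel (by norm_num) (by norm_num)
  obtain ⟨θ, hθt, hθ⟩ := hcover t ν
    (by
      intro i u hu v hv
      have h1 : dist u v ≤ (Metric.ediam (t i)).toReal := by
        rw [dist_edist]
        exact ENNReal.toReal_mono (hdt i) (Metric.edist_le_ediam_of_mem hu hv)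
      exact h1.trans (hν1 i))
    (by
      intro i
      have h1 := (ENNReal.le_tsum i).trans_lt hwsum
      rw [ENNReal.ofReal_lt_ofReal_iff (by positivity),
        inv_lt_inv₀ (by positivity) (by positivity)] at h1
      exact (pow_lt_pow_iff_right₀ hx1).1 h1)
    (by
      intro m
      have hfin : {i | ν i = m}.Finite := by
        refine (ENNReal.finite_const_le_of_tsum_ne_top (ne_top_of_lt hwsum)
          (ε := ENNReal.ofReal ((x ^ m)⁻¹)) (by simpa using by positivity)).subset ?_
        rintro i rfl
        exact le_refl (w i)
      refine ⟨hfin.toFinset, fun i ↦ by simp, ?_⟩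
      have h1 := (ENNReal.sum_le_tsum hfin.toFinset).trans hwsum.le
      have h2 : ∑ i ∈ hfin.toFinset, w i =
          ENNReal.ofReal (hfin.toFinset.card * (x ^ m)⁻¹) := by
        rw [Finset.sum_congr rfl (g := fun _ ↦ ENNReal.ofReal ((x ^ m)⁻¹)) fun i hi ↦ by
          simp only [w, show ν i = m from hfin.mem_toFinset.1 hi]]
        rw [Finset.sum_const, nsmul_eq_mul, ENNReal.ofReal_mul (by positivity),
          ENNReal.ofReal_natCast]
      rw [h2, ENNReal.ofReal_le_ofReal_iff (by positivity), mul_inv_le_iff₀ (by positivity)] at h1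
      refine h1.trans (mul_le_of_le_one_left (by positivity) ?_)
      exact inv_le_one_of_one_le₀ (one_le_pow₀ hx1.le))
  obtain ⟨i, hi⟩ := Set.mem_iUnion.1 (hKt ⟨_, by norm_num, hθ⟩)
  exact hθt i hi
end
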